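/- Let μ be a Borel measure on ℝ with μ({0}) = 0 and ∫_ℝ min(1,u²) μ(du) < ∞, satisfying μ((0,∞)) > 0 and ∫_{|u|≥1} e^{Cu} μ(du) < ∞ for every C ∈ ℝ, and assume conditions (T1) and (T2). Fix H ∈ (1/2, 1) and define f_H(s) = [(1−s)_+^{H−1/2} − (−s)_+^{H−1/2}] / Γ(H+1/2) and, for t > 0, f(t,s) = [(t−s)_+^{H−1/2} − (−s)_+^{H−1/2}] / Γ(H+1/2), where x_+ = max(x,0). Define Ψ_H(t,z) = ∫_ℝ ∫_ℝ (e^{−izf(t,s)u} − 1 + izf(t,s)u) μ(du) ds for z ∈ ℂ, 𝓜_k^H(ζ) = ∫_ℝ f_H(s)^k M_k(f_H(s)ζ) ds for k ≥ 0, and for y ≥ 0 let ζ_H(y) be the unique ζ ≥ 0 with 𝓜₁^H(ζ) = y; set 𝒟_H(y) = −y·ζ_H(y) + 𝓜₀^H(ζ_H(y)) and 𝒦_H(y) = 𝓜₂^H(ζ_H(y)). Then for every t > 0 the function p_t(x) := (1/2π) ∫_ℝ e^{ixz + Ψ_H(t,z)} dz is well defined, and for every t₀ > 0, p_t(x) ·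 √(2π t^{2H} 𝒦_H(x/t^{H+1/2})) · exp(−t·𝒟_H(x/t^{H+1/2})) → 1 as t + x → +∞ along (t,x) ∈ [t₀,∞) × [0,∞). -/

import Mathlib

open MeasureTheory Filter Set

/-- The exponential moment functions `M_k` of a Lévy measure `μ`. -/
noncomputable def levyM (μ : Measure ℝ) : ℕ → ℝ → ℝ
  | 0, ξ => ∫ u, (Real.exp (ξ * u) - 1 - ξ * u) ∂μ
  | 1, ξ => ∫ u, u * (Real.exp (ξ * u) - 1) ∂μ
  | (n + 2), ξ => ∫ u, u ^ (n + 2) * Real.exp (ξ * u) ∂μ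

/-- `𝓜_k(ζ) = ∫_ℝ f(s)^k M_k(f(s)ζ) ds`. -/
noncomputable def kernelM (μ : Measure ℝ) (f : ℝ → ℝ) (k : ℕ) (ξ : ℝ) : ℝ :=
  ∫ s : ℝ, (f s) ^ k * levyM μ k (f s * ξ)

/-- `Ψ(z) = ∫_ℝ ∫_ℝ (e^{−izf(s)u} − 1 + izf(s)u) μ(du) ds`. -/
noncomputable def kernelPsi (μ : Measure ℝ) (f : ℝ → ℝ) (z : ℂ) : ℂ :=
  ∫ s : ℝ, ∫ u, (Complex.exp (-(Complex.I * z * ((f s * u : ℝ) : ℂ))) - 1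
    + Complex.I * z * ((f s * u : ℝ) : ℂ)) ∂μ

/-- The normalized kernel of the fractional Lévy motion:
`f_H(s) = [(1−s)_+^{H−1/2} − (−s)_+^{H−1/2}]/Γ(H+1/2)`. -/
noncomputable def fracKernel (H : ℝ) (s : ℝ) : ℝ :=
  ((max (1 - s) 0) ^ (H - 1/2) - (max (-s) 0) ^ (H - 1/2)) / Real.Gamma (H + 1/2)

/-- The time-dependent kernel of the fractional Lévy motion:
`f(t,s) = [(t−s)_+^{H−1/2} − (−s)_+^{H−1/2}]/Γ(H+1/2)`. -/
noncomputable def fracKernelT (H : ℝ) (t s : ℝ) : ℝ :=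
  ((max (t - s) 0) ^ (H - 1/2) - (max (-s) 0) ^ (H - 1/2)) / Real.Gamma (H + 1/2)

/-
The measure `ds ⊗ μ(du)` pushed forward by `(s, u) ↦ f_H(s) u` is a Lévy measure `ν` with
characteristic exponent `Ψ_H(1, ·)` and moment functions `𝓜_k^H`, so that by self-similarity
`p_t` is the inverse Fourier transform of `exp (t Ψ)` for the exponent `Ψ` of `ν`. Shifting the
contour of integration to height `ζ_H(y)` kills the linear term of the exponent and produces the
factor `exp (t 𝒟_H(y))`. What remains is `∫ exp (t χ(w)) dw`, where `χ(w) ≈ -𝒦_H(y) w² / 2`.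
On the zone `w² ≤ M₂ / (2 M₄)` dominated convergence after rescaling gives the Gaussian integral,
with an error governed by `M₄ / (t M₂²)`, which (T1) makes small. Off this zone `-Re χ(w)`
is bounded below in two ways: the oscillation of the phase `w f_H(s) u` over `s ∈ [0, 1/2]` gives
a bound growing exponentially in `ζ`, which by (T2) beats the size of `M₂`, and the slow decay
of `f_H` at `-∞` gives a power `|w|^{4H-2}` whatever `μ` is, which makes the integrals converge.
-/

/-! ### Elementary inequalities -/

lemma cos_le_one_sub_sq_add_pow_four (x : ℝ) : Real.cos x ≤ 1 - x ^ 2 / 2 + x ^ 4 / 2 := by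
  rcases le_or_gt |x| 1 with h | h
  · have hcos := (abs_le.1 (Real.cos_bound h)).2
    rw [Even.pow_abs (by decide)] at hcos
    have : 0 ≤ x ^ 4 := by positivity
    linarith
  · have h1 : 1 < x ^ 2 := (one_lt_sq_iff_one_lt_abs x).2 h
    nlinarith [Real.cos_le_one x]

lemma sq_div_eight_le_one_sub_cos {x : ℝ} (hx : |x| ≤ 1) : x ^ 2 / 8 ≤ 1 - Real.cos x := by
  have hcos := Real.cos_le_one_sub_mul_cos_sq (hx.trans (by linarith [Real.pi_gt_three]))
  have hpi : 1 / 8 ≤ 2 / Real.pi ^ 2 := by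
    rw [div_le_div_iff₀ (by norm_num) (by positivity)]
    nlinarith [Real.pi_lt_four, Real.pi_pos]
  nlinarith [sq_nonneg x]

lemma norm_cexp_neg_I_mul_sub_taylor_le (x : ℝ) :
    ‖Complex.exp (-(Complex.I * x)) - 1 + Complex.I * x + (x : ℂ) ^ 2 / 2‖ ≤ 4 * |x| ^ 3 := by
  rcases le_or_gt |x| 1 with h | h
  · have htaylor := Complex.norm_exp_sub_sum_le_norm_mul_exp (-(Complex.I * x)) 3
    have hsum : ∑ m ∈ Finset.range 3, (-(Complex.I * (x : ℂ))) ^ m / (m.factorial : ℂ)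
        = 1 - Complex.I * x - (x : ℂ) ^ 2 / 2 := by
      simp only [Finset.sum_range_succ, Finset.range_zero, Finset.sum_empty, Nat.factorial,
        neg_sq, mul_pow, Complex.I_sq]
      norm_num
      ring
    have hexp : Real.exp |x| ≤ 4 := by
      linarith [Real.exp_le_exp.2 h, Real.exp_one_lt_d9]
    calc _ = ‖Complex.exp (-(Complex.I * x)) - (1 - Complex.I * x - (x : ℂ) ^ 2 / 2)‖ := by
          congr 1
          ring
      _ ≤ |x| ^ 3 * Real.exp |x| := by simpa [hsum] using htaylor
      _ ≤ 4 * |x| ^ 3 := by nlinarith [pow_nonneg (abs_nonneg x) 3]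
  · have hnorm : ‖Complex.exp (-(Complex.I * x))‖ = 1 := by simp [Complex.norm_exp]
    calc _ ≤ ‖Complex.exp (-(Complex.I * x))‖ + ‖(1 : ℂ)‖ + ‖Complex.I * x‖ + ‖(x : ℂ) ^ 2 / 2‖ :=
          (norm_add_le _ _).trans
            (add_le_add_left ((norm_add_le _ _).trans (add_le_add_left (norm_sub_le _ _) _)) _)
      _ = 2 + |x| + |x| ^ 2 / 2 := by
          rw [hnorm]
          norm_num
      _ ≤ 4 * |x| ^ 3 := by
          have h2 : |x| ≤ |x| ^ 2 := by nlinarith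
          have h3 : |x| ^ 2 ≤ |x| ^ 3 := by nlinarith
          linarith

lemma abs_sin_le_abs_mul (x : ℝ) : |Real.sin x| ≤ |x| * (1 - min 1 (x ^ 2) / 40) := by
  have hmin : min 1 (x ^ 2) ≤ 1 := min_le_left _ _
  rcases le_or_gt |x| 2 with h | h
  · have habs : |x / 2| ≤ 1 := by rw [abs_div, abs_two]; linarith
    have hcos : |Real.cos (x / 2)| ≤ 1 - min 1 (x ^ 2) / 40 := by
      rw [abs_of_nonneg (Real.cos_nonneg_of_neg_pi_div_two_le_of_le
        (by linarith [(abs_le.1 habs).1, Real.pi_gt_three])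
        (by linarith [(abs_le.1 habs).2, Real.pi_gt_three]))]
      nlinarith [sq_div_eight_le_one_sub_cos habs, min_le_right 1 (x ^ 2)]
    calc |Real.sin x| = 2 * |Real.sin (x / 2)| * |Real.cos (x / 2)| := by
          rw [← mul_div_cancel₀ x (two_ne_zero (α := ℝ)), Real.sin_two_mul, abs_mul, abs_mul,
            abs_two, mul_div_cancel_left₀ _ two_ne_zero]
      _ ≤ 2 * |x / 2| * (1 - min 1 (x ^ 2) / 40) := by
          gcongr ?_ * ?_
          gcongr 2 * ?_
          exact Real.abs_sin_le_abs
      _ = |x| * (1 - min 1 (x ^ 2) / 40) := by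
          rw [abs_div, abs_two]
          ring
  · nlinarith [Real.abs_sin_le_one x]

lemma abs_sin_mul_sub_sin_mul_le (l x y : ℝ) :
    |Real.sin (l * x) - Real.sin (l * y)|
      ≤ |l * (x - y)| * (1 - min 1 ((l * (x - y) / 2) ^ 2) / 40) := by
  have hdiff : (l * x - l * y) / 2 = l * (x - y) / 2 := by ring
  calc |Real.sin (l * x) - Real.sin (l * y)|
      = 2 * |Real.sin (l * (x - y) / 2)| * |Real.cos ((l * x + l * y) / 2)| := by
        rw [Real.sin_sub_sin, abs_mul, abs_mul, abs_two, hdiff]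
    _ ≤ 2 * |Real.sin (l * (x - y) / 2)| * 1 := by
        gcongr
        exact Real.abs_cos_le_one _
    _ ≤ 2 * (|l * (x - y) / 2| * (1 - min 1 ((l * (x - y) / 2) ^ 2) / 40)) := by
        rw [mul_one]
        gcongr
        exact abs_sin_le_abs_mul _
    _ = _ := by
        rw [abs_div, abs_two]
        ring

lemma min_one_mul_min_one_le {a x : ℝ} (ha : 0 ≤ a) (hx : 0 ≤ x) :
    min 1 a * min 1 x ≤ min 1 (a * x) := by
  refine le_min (mul_le_one₀ (min_le_left _ _) (le_min zero_le_one hx) (min_le_left _ _)) ?_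
  exact mul_le_mul (min_le_right _ _) (min_le_right _ _) (le_min zero_le_one hx) ha

/-! ### Oscillation of the cosine along a decreasing function -/

section Oscillation

variable {g g' : ℝ → ℝ} {a b : ℝ}

lemma integral_one_sub_cos_comp_mul_deriv (hab : a ≤ b)
    (hg : ∀ s ∈ Icc a b, HasDerivAt g (g' s) s) (hg' : ContinuousOn g' (Icc a b))
    {l : ℝ} (hl : l ≠ 0) :
    ∫ s in a..b, (1 - Real.cos (l * g s)) * -g' s
      = (g a - g b) - (Real.sin (l * g a) - Real.sin (l * g b)) / l := by
  have hgc : ContinuousOn g (Icc a b) := fun s hs => (hg s hs).continuousAt.continuousWithinAt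
  rw [← uIcc_of_le hab] at hg hg' hgc
  rw [intervalIntegral.integral_eq_sub_of_hasDerivAt
    (f := fun s => -g s + Real.sin (l * g s) / l) (fun s hs => ?_)
    (ContinuousOn.intervalIntegrable (by fun_prop))]
  · ring
  · refine ((hg s hs).neg.add ((((hg s hs).const_mul l).sin).div_const l)).congr_deriv ?_
    field_simp
    ring

/-- Substituting `g` turns the integral into an average of `1 - cos (l * ·)` over `[g b, g a]`,
and that average is bounded below uniformly in large `l`. -/
lemma le_integral_one_sub_cos_comp {C : ℝ} (hab : a ≤ b) (hC : 0 < C)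
    (hg : ∀ s ∈ Icc a b, HasDerivAt g (g' s) s) (hg' : ContinuousOn g' (Icc a b))
    (hbound : ∀ s ∈ Icc a b, -g' s ≤ C) (hlt : g b < g a) (l : ℝ) :
    (g a - g b) / C * (min 1 ((l * (g a - g b) / 2) ^ 2) / 40)
      ≤ ∫ s in a..b, (1 - Real.cos (l * g s)) := by
  rcases eq_or_ne l 0 with rfl | hl
  · simp
  have hgc : ContinuousOn g (Icc a b) := fun s hs => (hg s hs).continuousAt.continuousWithinAt
  have hmono : ∫ s in a..b, (1 - Real.cos (l * g s)) * -g' s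
      ≤ ∫ s in a..b, C * (1 - Real.cos (l * g s)) := by
    refine intervalIntegral.integral_mono_on hab
      (ContinuousOn.intervalIntegrable (by rw [uIcc_of_le hab]; fun_prop))
      (ContinuousOn.intervalIntegrable (by rw [uIcc_of_le hab]; fun_prop)) fun s hs => ?_
    nlinarith [Real.cos_le_one (l * g s), hbound s hs]
  rw [integral_one_sub_cos_comp_mul_deriv hab hg hg' hl,
    intervalIntegral.integral_const_mul] at hmono
  have hsin : (Real.sin (l * g a) - Real.sin (l * g b)) / l
      ≤ (g a - g b) * (1 - min 1 ((l * (g a - g b) / 2) ^ 2) / 40) := by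
    refine (le_abs_self _).trans ?_
    rw [abs_div, div_le_iff₀ (abs_pos.2 hl)]
    refine (abs_sin_mul_sub_sin_mul_le l (g a) (g b)).trans_eq ?_
    rw [abs_mul, abs_of_pos (sub_pos.2 hlt)]
    ring
  rw [div_mul_eq_mul_div, div_le_iff₀ hC]
  linarith

end Oscillation

/-! ### Exponents and moments of a measure on the line -/

/-- The integrand of the moment function `levyM · k ξ`, so that the three cases of `levyM` can be
treated uniformly. -/
noncomputable def levyIntegrand : ℕ → ℝ → ℝ → ℝ
  | 0, ξ, v => Real.exp (ξ * v) - 1 - ξ * v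
  | 1, ξ, v => v * (Real.exp (ξ * v) - 1)
  | n + 2, ξ, v => v ^ (n + 2) * Real.exp (ξ * v)

/-- The compensated exponential `e^{-iy} - 1 + iy` of the Lévy–Khintchine formula. -/
noncomputable def compensatedExp (y : ℂ) : ℂ :=
  Complex.exp (-(Complex.I * y)) - 1 + Complex.I * y

/-- The characteristic exponent `∫ (e^{-izv} - 1 + izv) ν(dv)` of the centered infinitely divisible
law with Lévy measure `ν` and no Gaussian part. -/
noncomputable def charExponent (ν : Measure ℝ) (z : ℂ) : ℂ :=
  ∫ v : ℝ, compensatedExp (z * v) ∂ν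

/-- The characteristic exponent of the Esscher transform `e^{xv} ν(dv)`. -/
noncomputable def tiltedExponent (ν : Measure ℝ) (x w : ℝ) : ℂ :=
  ∫ v : ℝ, (Real.exp (x * v) : ℂ) * compensatedExp (w * v : ℝ) ∂ν

/-- Minus the real part of `tiltedExponent`: the rate at which the integrand decays along the
line `Im z = x`. -/
noncomputable def damping (ν : Measure ℝ) (x w : ℝ) : ℝ :=
  ∫ v : ℝ, Real.exp (x * v) * (1 - Real.cos (w * v)) ∂ν

/-- Finiteness of all the integrals `∫ v² e^{C|v|} ν(dv)`: the integrability of a Lévy measure with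
all exponential moments. -/
def HasExpSqMoments (ν : Measure ℝ) : Prop :=
  ∀ C : ℝ, Integrable (fun v : ℝ => v ^ 2 * Real.exp (C * |v|)) ν

lemma levyM_eq_integral (ν : Measure ℝ) (k : ℕ) (ξ : ℝ) :
    levyM ν k ξ = ∫ v, levyIntegrand k ξ v ∂ν := by
  match k with
  | 0 | 1 | _ + 2 => rfl

lemma levyIntegrand_mul (k : ℕ) (ξ a u : ℝ) :
    levyIntegrand k ξ (a * u) = a ^ k * levyIntegrand k (a * ξ) u := by
  match k with
  | 0 | 1 | _ + 2 =>
    simp only [levyIntegrand, ← mul_assoc, mul_comm ξ a]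
    ring

lemma levyIntegrand_nonneg {k : ℕ} (hk : Even k) (ξ v : ℝ) : 0 ≤ levyIntegrand k ξ v := by
  match k with
  | 0 =>
    simp only [levyIntegrand]
    linarith [Real.add_one_le_exp (ξ * v)]
  | 1 => exact absurd hk (by decide)
  | _ + 2 => exact mul_nonneg (hk.pow_nonneg v) (Real.exp_pos _).le

lemma levyM_nonneg (ν : Measure ℝ) {k : ℕ} (hk : Even k) (ξ : ℝ) : 0 ≤ levyM ν k ξ := by
  rw [levyM_eq_integral]
  exact integral_nonneg (levyIntegrand_nonneg hk ξ)

@[fun_prop]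
lemma continuous_levyIntegrand (k : ℕ) (ξ : ℝ) : Continuous (levyIntegrand k ξ) := by
  match k with
  | 0 | 1 | _ + 2 =>
    unfold levyIntegrand
    fun_prop

@[fun_prop]
lemma continuous_compensatedExp : Continuous compensatedExp := by
  unfold compensatedExp
  fun_prop

lemma exp_mul_le_exp_abs_mul_abs (x v : ℝ) : Real.exp (x * v) ≤ Real.exp (|x| * |v|) := by
  rw [← abs_mul]
  exact Real.exp_le_exp.2 (le_abs_self _)

lemma norm_cexp_sub_one_le (z : ℂ) : ‖Complex.exp z - 1‖ ≤ ‖z‖ * Real.exp ‖z‖ := by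
  simpa using Complex.norm_exp_sub_sum_le_norm_mul_exp z 1

lemma norm_compensatedExp_le (y : ℂ) : ‖compensatedExp y‖ ≤ ‖y‖ ^ 2 * Real.exp ‖y‖ := by
  simpa [compensatedExp, Finset.sum_range_succ, ← sub_sub]
    using Complex.norm_exp_sub_sum_le_norm_mul_exp (-(Complex.I * y)) 2

lemma norm_compensatedExp_mul_ofReal_le (z : ℂ) (v : ℝ) :
    ‖compensatedExp (z * v)‖ ≤ ‖z‖ ^ 2 * (v ^ 2 * Real.exp (‖z‖ * |v|)) := by
  refine (norm_compensatedExp_le _).trans_eq ?_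
  rw [norm_mul, Complex.norm_real, Real.norm_eq_abs, mul_pow, sq_abs]
  ring

lemma re_compensatedExp_ofReal (y : ℝ) : (compensatedExp y).re = Real.cos y - 1 := by
  simp [compensatedExp, Complex.exp_re]

lemma hasDerivAt_compensatedExp (y : ℂ) :
    HasDerivAt compensatedExp (-Complex.I * (Complex.exp (-(Complex.I * y)) - 1)) y := by
  have hI : HasDerivAt (fun y : ℂ => Complex.I * y) Complex.I y := by
    simpa using (hasDerivAt_id y).const_mul Complex.I
  refine (((hI.neg.cexp).sub_const 1).add hI).congr_deriv ?_
  rw [Pi.neg_apply]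
  ring

lemma compensatedExp_mul_add_mul_I (w x v : ℝ) :
    compensatedExp ((w + x * Complex.I) * v)
      = levyIntegrand 0 x v - Complex.I * w * levyIntegrand 1 x v
        + Real.exp (x * v) * compensatedExp (w * v : ℝ) := by
  have hexp : -(Complex.I * ((w + x * Complex.I) * v))
      = (x * v : ℝ) + -(Complex.I * (w * v : ℝ)) := by
    push_cast
    linear_combination (-(x : ℂ) * v) * Complex.I_sq
  simp only [compensatedExp, levyIntegrand]
  rw [hexp, Complex.exp_add]
  push_cast
  linear_combination ((x : ℂ) * v) * Complex.I_sq

namespace HasExpSqMoments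

variable {ν : Measure ℝ} (hν : HasExpSqMoments ν)
include hν

lemma integrable_of_norm_le {E : Type*} [NormedAddCommGroup E] {F : ℝ → E}
    (hF : AEStronglyMeasurable F ν) (K C : ℝ)
    (hle : ∀ v, ‖F v‖ ≤ K * (v ^ 2 * Real.exp (C * |v|))) : Integrable F ν :=
  ((hν C).const_mul K).mono' hF (Eventually.of_forall hle)

lemma integrable_compensatedExp (z : ℂ) : Integrable (fun v : ℝ => compensatedExp (z * v)) ν :=
  hν.integrable_of_norm_le (by fun_prop) _ _ (norm_compensatedExp_mul_ofReal_le z)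

lemma integrable_abs_pow_mul_exp (n : ℕ) (x : ℝ) :
    Integrable (fun v : ℝ => |v| ^ (n + 2) * Real.exp (x * v)) ν := by
  refine hν.integrable_of_norm_le (by fun_prop) n.factorial (1 + |x|) fun v => ?_
  have hpow : |v| ^ n ≤ n.factorial * Real.exp |v| :=
    (div_le_iff₀' (by positivity)).1 (Real.pow_div_factorial_le_exp |v| (abs_nonneg v) n)
  rw [Real.norm_of_nonneg (by positivity)]
  calc |v| ^ (n + 2) * Real.exp (x * v) = v ^ 2 * (|v| ^ n * Real.exp (x * v)) := by
        rw [pow_add, sq_abs]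
        ring
    _ ≤ v ^ 2 * (n.factorial * Real.exp |v| * Real.exp (|x| * |v|)) := by
        gcongr v ^ 2 * (?_ * ?_)
        exact exp_mul_le_exp_abs_mul_abs x v
    _ = n.factorial * (v ^ 2 * Real.exp ((1 + |x|) * |v|)) := by
        rw [add_mul, one_mul, Real.exp_add]
        ring

lemma integrable_levyIntegrand (k : ℕ) (x : ℝ) : Integrable (levyIntegrand k x) ν := by
  match k with
  | 0 =>
    refine (hν.integrable_compensatedExp (x * Complex.I)).norm.mono (by fun_prop)
      (Eventually.of_forall fun v => le_of_eq ?_)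
    rw [norm_norm, ← Complex.norm_real]
    congr 1
    simpa [compensatedExp] using (compensatedExp_mul_add_mul_I 0 x v).symm
  | 1 =>
    refine hν.integrable_of_norm_le (by fun_prop) |x| |x| fun v => ?_
    have hexp : |Real.exp (x * v) - 1| ≤ |x * v| * Real.exp |x * v| := by
      simpa [← Complex.ofReal_mul, ← Complex.ofReal_exp, ← Complex.ofReal_one,
        ← Complex.ofReal_sub, Complex.norm_real, -Complex.ofReal_mul] using
        norm_cexp_sub_one_le ((x * v : ℝ) : ℂ)
    calc ‖v * (Real.exp (x * v) - 1)‖ ≤ |v| * (|x * v| * Real.exp |x * v|) := by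
          rw [norm_mul, Real.norm_eq_abs, Real.norm_eq_abs]
          gcongr
      _ = |x| * (|v| ^ 2 * Real.exp (|x| * |v|)) := by
          rw [abs_mul]
          ring
      _ = _ := by rw [sq_abs]
  | n + 2 =>
    refine (hν.integrable_abs_pow_mul_exp n x).mono (by fun_prop)
      (Eventually.of_forall fun v => ?_)
    simp [levyIntegrand]

lemma levyM_pos (hν0 : 0 < ν {0}ᶜ) {k : ℕ} (hk : Even k) (hk0 : k ≠ 0) (x : ℝ) :
    0 < levyM ν k x := by
  obtain ⟨n, rfl⟩ : ∃ n, k = n + 2 :=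
    Nat.exists_eq_add_of_le' (by rcases hk with ⟨m, rfl⟩; lia)
  rw [levyM_eq_integral, integral_pos_iff_support_of_nonneg (levyIntegrand_nonneg hk x)
    (hν.integrable_levyIntegrand _ x)]
  convert! hν0 using 2
  ext v
  simp [levyIntegrand, (Real.exp_pos _).ne']

lemma levyM_two_pos (hν0 : 0 < ν {0}ᶜ) (x : ℝ) : 0 < levyM ν 2 x :=
  hν.levyM_pos hν0 even_two two_ne_zero x

lemma levyM_four_pos (hν0 : 0 < ν {0}ᶜ) (x : ℝ) : 0 < levyM ν 4 x :=
  hν.levyM_pos hν0 (by decide) four_ne_zero x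

lemma integrable_tiltedExponent (x w : ℝ) :
    Integrable (fun v : ℝ => (Real.exp (x * v) : ℂ) * compensatedExp (w * v : ℝ)) ν := by
  refine (((hν.integrable_compensatedExp (w + x * Complex.I)).sub
    (hν.integrable_levyIntegrand 0 x).ofReal).add
    ((hν.integrable_levyIntegrand 1 x).ofReal.const_mul (Complex.I * w))).congr
    (Eventually.of_forall fun v => ?_)
  simp only [Pi.add_apply, Pi.sub_apply, compensatedExp_mul_add_mul_I, Complex.coe_algebraMap]
  ring

lemma integrable_damping (x w : ℝ) :
    Integrable (fun v : ℝ => Real.exp (x * v) * (1 - Real.cos (w * v))) ν := by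
  refine (hν.integrable_tiltedExponent x w).re.neg.congr (Eventually.of_forall fun v => ?_)
  simp only [Pi.neg_apply, RCLike.re_to_complex, Complex.re_ofReal_mul, re_compensatedExp_ofReal]
  ring

lemma differentiable_charExponent : Differentiable ℂ (charExponent ν) := by
  intro z₀
  refine (hasDerivAt_integral_of_dominated_loc_of_deriv_le (μ := ν)
    (F := fun (z : ℂ) (v : ℝ) => compensatedExp (z * v))
    (F' := fun (z : ℂ) (v : ℝ) => -Complex.I * (Complex.exp (-(Complex.I * (z * v))) - 1) * v)
    (bound := fun v => (‖z₀‖ + 1) * (v ^ 2 * Real.exp ((‖z₀‖ + 1) * |v|)))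
    (Metric.ball_mem_nhds z₀ one_pos)
    (Eventually.of_forall fun z => by fun_prop) (hν.integrable_compensatedExp z₀) (by fun_prop)
    (Eventually.of_forall fun v z hz => ?_) ((hν _).const_mul _)
    (Eventually.of_forall fun v z _ => ?_)).2.differentiableAt
  · have hz : ‖z‖ ≤ ‖z₀‖ + 1 := by
      linarith [norm_le_norm_add_norm_sub' z z₀, mem_ball_iff_norm.1 hz]
    have hexp : ‖Complex.exp (-(Complex.I * (z * v))) - 1‖ ≤ ‖z‖ * |v| * Real.exp (‖z‖ * |v|) := by
      simpa using norm_cexp_sub_one_le (-(Complex.I * (z * v)))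
    calc _ = ‖Complex.exp (-(Complex.I * (z * v))) - 1‖ * |v| := by simp
      _ ≤ (‖z₀‖ + 1) * |v| * Real.exp ((‖z₀‖ + 1) * |v|) * |v| := by
          gcongr
          exact hexp.trans (by gcongr)
      _ = (‖z₀‖ + 1) * (|v| ^ 2 * Real.exp ((‖z₀‖ + 1) * |v|)) := by ring
      _ = _ := by rw [sq_abs]
  · have hmul : HasDerivAt (fun z : ℂ => z * v) (v : ℂ) z := by
      simpa using (hasDerivAt_id z).mul_const (v : ℂ)
    exact (hasDerivAt_compensatedExp (z * v)).comp z hmul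

lemma charExponent_add_mul_I (x w : ℝ) :
    charExponent ν (w + x * Complex.I)
      = levyM ν 0 x - Complex.I * w * levyM ν 1 x + tiltedExponent ν x w := by
  have h0 : Integrable (fun v => (levyIntegrand 0 x v : ℂ)) ν :=
    (hν.integrable_levyIntegrand 0 x).ofReal
  have h1 : Integrable (fun v => Complex.I * w * (levyIntegrand 1 x v : ℂ)) ν :=
    (hν.integrable_levyIntegrand 1 x).ofReal.const_mul _
  simp only [charExponent, tiltedExponent, levyM_eq_integral, compensatedExp_mul_add_mul_I]
  rw [integral_add (by exact h0.sub h1) (hν.integrable_tiltedExponent x w), integral_sub h0 h1,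
    integral_const_mul, integral_complex_ofReal, integral_complex_ofReal]

lemma charExponent_ofReal (w : ℝ) : charExponent ν w = tiltedExponent ν 0 w := by
  simpa [levyM] using hν.charExponent_add_mul_I 0 w

lemma re_tiltedExponent (x w : ℝ) : (tiltedExponent ν x w).re = -damping ν x w := by
  have hre := (Complex.reCLM.integral_comp_comm (hν.integrable_tiltedExponent x w)).symm
  simp only [Complex.reCLM_apply, Complex.re_ofReal_mul, re_compensatedExp_ofReal] at hre
  rw [tiltedExponent, hre, damping, ← integral_neg]
  congr 1 with v
  ring

lemma integral_abs_pow_three_mul_exp_le (x : ℝ) :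
    ∫ v, |v| ^ 3 * Real.exp (x * v) ∂ν ≤ √(levyM ν 2 x * levyM ν 4 x) := by
  have hsq (y : ℝ) : Real.exp (y / 2) ^ 2 = Real.exp y := by
    rw [← Real.exp_nat_mul]
    congr 1
    norm_num
    ring
  have hf (v : ℝ) : (|v| * Real.exp (x * v / 2)) ^ 2 = v ^ 2 * Real.exp (x * v) := by
    rw [mul_pow, sq_abs, hsq]
  have hg (v : ℝ) : (v ^ 2 * Real.exp (x * v / 2)) ^ 2 = v ^ 4 * Real.exp (x * v) := by
    rw [mul_pow, hsq]
    ring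
  have hfL : MemLp (fun v : ℝ => |v| * Real.exp (x * v / 2)) (ENNReal.ofReal 2) ν := by
    rw [ENNReal.ofReal_ofNat, memLp_two_iff_integrable_sq (by fun_prop)]
    simpa only [hf] using! hν.integrable_levyIntegrand 2 x
  have hgL : MemLp (fun v : ℝ => v ^ 2 * Real.exp (x * v / 2)) (ENNReal.ofReal 2) ν := by
    rw [ENNReal.ofReal_ofNat, memLp_two_iff_integrable_sq (by fun_prop)]
    simpa only [hg] using! hν.integrable_levyIntegrand 4 x
  have hholder := integral_mul_le_Lp_mul_Lq_of_nonneg (μ := ν) Real.HolderConjugate.two_two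
    (Eventually.of_forall fun v : ℝ => by positivity)
    (Eventually.of_forall fun v : ℝ => by positivity) hfL hgL
  simp only [Real.rpow_two, hf, hg, ← Real.sqrt_eq_rpow] at hholder
  change _ ≤ √(levyM ν 2 x) * √(levyM ν 4 x) at hholder
  rw [Real.sqrt_mul (levyM_nonneg ν even_two x)]
  refine (integral_congr_ae (Eventually.of_forall fun v => ?_)).trans_le hholder
  rw [← hsq (x * v), ← sq_abs v]
  ring

lemma norm_tiltedExponent_add_le (x w : ℝ) :
    ‖tiltedExponent ν x w + levyM ν 2 x * (w : ℂ) ^ 2 / 2‖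
      ≤ 4 * |w| ^ 3 * √(levyM ν 2 x * levyM ν 4 x) := by
  have htaylor (v : ℝ) : ‖compensatedExp (w * v : ℝ) + ((w * v : ℝ) : ℂ) ^ 2 / 2‖
      ≤ 4 * |w * v| ^ 3 := norm_cexp_neg_I_mul_sub_taylor_le (w * v)
  have h2 : Integrable (fun v => (levyIntegrand 2 x v : ℂ) * ((w : ℂ) ^ 2 / 2)) ν :=
    (hν.integrable_levyIntegrand 2 x).ofReal.mul_const _
  have hsum : tiltedExponent ν x w + levyM ν 2 x * (w : ℂ) ^ 2 / 2 = ∫ v : ℝ,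
      (Real.exp (x * v) : ℂ) * (compensatedExp (w * v : ℝ) + ((w * v : ℝ) : ℂ) ^ 2 / 2) ∂ν := by
    rw [levyM_eq_integral, ← integral_complex_ofReal, mul_div_assoc, ← integral_mul_const,
      tiltedExponent, ← integral_add (hν.integrable_tiltedExponent x w) h2]
    congr 1 with v
    simp only [levyIntegrand]
    push_cast
    ring
  calc _ ≤ ∫ v : ℝ, 4 * |w| ^ 3 * (|v| ^ 3 * Real.exp (x * v)) ∂ν := by
        rw [hsum]
        refine norm_integral_le_of_norm_le ((hν.integrable_abs_pow_mul_exp 1 x).const_mul _)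
          (Eventually.of_forall fun v => ?_)
        rw [norm_mul, Complex.norm_real, Real.norm_of_nonneg (Real.exp_pos _).le]
        calc _ ≤ Real.exp (x * v) * (4 * |w * v| ^ 3) := by
              gcongr
              exact htaylor v
          _ = _ := by
              rw [abs_mul, mul_pow]
              ring
    _ ≤ _ := by
        rw [integral_const_mul]
        gcongr
        exact hν.integral_abs_pow_three_mul_exp_le x

lemma levyM_two_mul_sub_levyM_four_mul_le_damping (x w : ℝ) :
    levyM ν 2 x * (w ^ 2 / 2) - levyM ν 4 x * (w ^ 4 / 2) ≤ damping ν x w := by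
  have h2 := (hν.integrable_levyIntegrand 2 x).mul_const (w ^ 2 / 2)
  have h4 := (hν.integrable_levyIntegrand 4 x).mul_const (w ^ 4 / 2)
  rw [levyM_eq_integral, levyM_eq_integral, ← integral_mul_const, ← integral_mul_const,
    ← integral_sub h2 h4]
  refine integral_mono (h2.sub h4) (hν.integrable_damping x w) fun v => ?_
  calc _ = Real.exp (x * v) * ((w * v) ^ 2 / 2 - (w * v) ^ 4 / 2) := by
        simp only [levyIntegrand]
        ring
    _ ≤ _ := by
        gcongr ?_ * ?_
        linarith [cos_le_one_sub_sq_add_pow_four (w * v)]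

lemma monotone_levyM_one : Monotone (levyM ν 1) := by
  intro x y hxy
  refine integral_mono (hν.integrable_levyIntegrand 1 x) (hν.integrable_levyIntegrand 1 y)
    fun v => ?_
  rcases le_or_gt 0 v with hv | hv
  · simp only
    gcongr
  · have : Real.exp (y * v) ≤ Real.exp (x * v) := Real.exp_le_exp.2 (by nlinarith)
    nlinarith

end HasExpSqMoments

/-! ### Shift of the contour -/

section ContourShift

variable {E : Type*} [NormedAddCommGroup E] [NormedSpace ℂ E] {F : ℂ → E} {g : ℝ → ℝ} {x : ℝ}

lemma integral_sub_integral_add_mul_I (hF : Differentiable ℂ F) (x T : ℝ) :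
    (∫ w in -T..T, F w) - ∫ w in -T..T, F (w + x * Complex.I)
      = Complex.I • (∫ y in (0 : ℝ)..x, F ((-T : ℝ) + y * Complex.I))
        - Complex.I • ∫ y in (0 : ℝ)..x, F (T + y * Complex.I) := by
  have hrect := Complex.integral_boundary_rect_eq_zero_of_differentiableOn F ⟨-T, 0⟩ ⟨T, x⟩
    hF.differentiableOn
  simp only [Complex.ofReal_zero, zero_mul, add_zero] at hrect
  rw [← sub_eq_zero, ← hrect]
  abel

lemma tendsto_verticalIntegral_zero {l : Filter ℝ} (hg : Tendsto g l (nhds 0))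
    (hFg : ∀ w : ℝ, ∀ y ∈ uIcc 0 x, ‖F (w + y * Complex.I)‖ ≤ g w) :
    Tendsto (fun T : ℝ => Complex.I • ∫ y in (0 : ℝ)..x, F (T + y * Complex.I)) l (nhds 0) := by
  refine squeeze_zero_norm (a := fun T => g T * |x - 0|) (fun T => ?_)
    (by simpa using hg.mul_const |x - 0|)
  rw [norm_smul, Complex.norm_I, one_mul]
  exact intervalIntegral.norm_integral_le_of_norm_le_const fun y hy =>
    hFg T y (uIoc_subset_uIcc hy)

lemma integral_eq_integral_add_mul_I (hF : Differentiable ℂ F) (hg : Integrable g)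
    (hgTop : Tendsto g atTop (nhds 0)) (hgBot : Tendsto g atBot (nhds 0))
    (hFg : ∀ w : ℝ, ∀ y ∈ uIcc 0 x, ‖F (w + y * Complex.I)‖ ≤ g w) :
    ∫ w : ℝ, F w = ∫ w : ℝ, F (w + x * Complex.I) := by
  have hFc : Continuous F := hF.continuous
  have hint (y : ℝ) (hy : y ∈ uIcc 0 x) : Integrable (fun w : ℝ => F (w + y * Complex.I)) :=
    hg.mono' (by fun_prop) (Eventually.of_forall fun w => hFg w y hy)
  have hlim (y : ℝ) (hy : y ∈ uIcc 0 x) :=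
    intervalIntegral_tendsto_integral (hint y hy) tendsto_neg_atTop_atBot tendsto_id
  have hdiff := (hlim 0 left_mem_uIcc).sub (hlim x right_mem_uIcc)
  simp only [Complex.ofReal_zero, zero_mul, add_zero, id_eq] at hdiff
  have hzero := ((tendsto_verticalIntegral_zero hgBot hFg).comp tendsto_neg_atTop_atBot).sub
    (tendsto_verticalIntegral_zero hgTop hFg)
  rw [sub_zero] at hzero
  refine sub_eq_zero.1 (tendsto_nhds_unique hdiff (hzero.congr fun T => ?_))
  exact (integral_sub_integral_add_mul_I hF x T).symm

end ContourShift

lemma integrable_exp_neg_mul_abs_rpow {c β : ℝ} (hc : 0 < c) (hβ : 0 < β) :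
    Integrable (fun w : ℝ => Real.exp (-(c * |w| ^ β))) := by
  have hpos : IntegrableOn (fun w : ℝ => Real.exp (-(c * |w| ^ β))) (Ioi 0) := by
    refine (integrableOn_rpow_mul_exp_neg_mul_rpow (p := β) (s := 0) (b := c) (by norm_num) hβ
      hc).congr_fun (fun w hw => ?_) measurableSet_Ioi
    simp only [Real.rpow_zero, one_mul]
    rw [abs_of_pos hw, neg_mul]
  rw [← integrableOn_univ, ← @Iio_union_Ici _ _ (0 : ℝ), integrableOn_union,
    integrableOn_Ici_iff_integrableOn_Ioi]
  exact ⟨by simpa using hpos.comp_neg, hpos⟩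

lemma tendsto_exp_neg_mul_abs_rpow {c β : ℝ} (hc : 0 < c) (hβ : 0 < β) {l : Filter ℝ}
    (hl : Tendsto (fun w : ℝ => |w|) l atTop) :
    Tendsto (fun w : ℝ => Real.exp (-(c * |w| ^ β))) l (nhds 0) :=
  Real.tendsto_exp_neg_atTop_nhds_zero.comp
    (((tendsto_rpow_atTop hβ).comp hl).const_mul_atTop hc)

/-! ### The Gaussian zone around the saddle point -/

/-- The frequencies at which the quadratic term of `tiltedExponent` dominates the quartic one. -/
def gaussianZone (ν : Measure ℝ) (x : ℝ) : Set ℝ :=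
  {w | w ^ 2 ≤ levyM ν 2 x / (2 * levyM ν 4 x)}

lemma measurableSet_gaussianZone (ν : Measure ℝ) (x : ℝ) : MeasurableSet (gaussianZone ν x) :=
  measurableSet_le (by fun_prop) (by fun_prop)

namespace HasExpSqMoments

variable {ν : Measure ℝ} (hν : HasExpSqMoments ν)
include hν

lemma continuous_tiltedExponent (x : ℝ) : Continuous (tiltedExponent ν x) := by
  have hΨ := hν.differentiable_charExponent.continuous
  have heq : tiltedExponent ν x = fun w : ℝ => charExponent ν (w + x * Complex.I)
      - (levyM ν 0 x - Complex.I * w * levyM ν 1 x) := by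
    ext w
    rw [hν.charExponent_add_mul_I]
    ring
  rw [heq]
  fun_prop

lemma norm_cexp_mul_tiltedExponent (t x w : ℝ) :
    ‖Complex.exp (t * tiltedExponent ν x w)‖ = Real.exp (-(t * damping ν x w)) := by
  rw [Complex.norm_exp, Complex.re_ofReal_mul, hν.re_tiltedExponent, mul_neg]

lemma mul_levyM_two_mul_div_sqrt_sq (hν0 : 0 < ν {0}ᶜ) {t : ℝ} (ht : 0 < t) (x v : ℝ) :
    t * (levyM ν 2 x * (v / √(t * levyM ν 2 x)) ^ 2) = v ^ 2 := by
  have h2 := hν.levyM_two_pos hν0 x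
  rw [div_pow, Real.sq_sqrt (by positivity)]
  field_simp

lemma le_damping_of_mem_gaussianZone (hν0 : 0 < ν {0}ᶜ) {x w : ℝ}
    (hw : w ∈ gaussianZone ν x) : levyM ν 2 x * w ^ 2 / 4 ≤ damping ν x w := by
  have h4 := hν.levyM_four_pos hν0 x
  have hquartic : levyM ν 4 x * w ^ 4 ≤ levyM ν 2 x * w ^ 2 / 2 := by
    have hw : w ^ 2 * (2 * levyM ν 4 x) ≤ levyM ν 2 x := (le_div_iff₀ (by positivity)).1 hw
    nlinarith [sq_nonneg w]
  linarith [hν.levyM_two_mul_sub_levyM_four_mul_le_damping x w]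

lemma norm_indicator_gaussianZone_div_sqrt_le (hν0 : 0 < ν {0}ᶜ) {t x : ℝ} (ht : 0 < t) (v : ℝ) :
    ‖(gaussianZone ν x).indicator (fun w => Complex.exp (t * tiltedExponent ν x w))
      (v / √(t * levyM ν 2 x))‖ ≤ Real.exp (-(1 / 4) * v ^ 2) := by
  by_cases hv : v / √(t * levyM ν 2 x) ∈ gaussianZone ν x
  · rw [indicator_of_mem hv, hν.norm_cexp_mul_tiltedExponent]
    refine Real.exp_le_exp.2 ?_
    nlinarith [hν.le_damping_of_mem_gaussianZone hν0 hv,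
      hν.mul_levyM_two_mul_div_sqrt_sq hν0 ht x v]
  · rw [indicator_of_notMem hv, norm_zero]
    exact (Real.exp_pos _).le

lemma norm_mul_tiltedExponent_div_sqrt_add_le (hν0 : 0 < ν {0}ᶜ) {t x : ℝ} (ht : 0 < t) (v : ℝ) :
    ‖t * tiltedExponent ν x (v / √(t * levyM ν 2 x)) - (-(1 / 2) * v ^ 2 : ℝ)‖
      ≤ 4 * |v| ^ 3 * √(levyM ν 4 x / (t * levyM ν 2 x ^ 2)) := by
  have h2 := hν.levyM_two_pos hν0 x
  set c := √(t * levyM ν 2 x)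
  have hcpos : 0 < c := Real.sqrt_pos.2 (by positivity)
  have hcsq : c ^ 2 = t * levyM ν 2 x := Real.sq_sqrt (by positivity)
  have hscale : (t : ℂ) * (levyM ν 2 x * ((v / c : ℝ) : ℂ) ^ 2) = (v : ℂ) ^ 2 := by
    exact_mod_cast congrArg (fun r : ℝ => (r : ℂ)) (hν.mul_levyM_two_mul_div_sqrt_sq hν0 ht x v)
  have hcenter : t * tiltedExponent ν x (v / c) - (-(1 / 2) * v ^ 2 : ℝ)
      = t * (tiltedExponent ν x (v / c) + levyM ν 2 x * ((v / c : ℝ) : ℂ) ^ 2 / 2) := by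
    push_cast at hscale ⊢
    linear_combination -hscale / 2
  have h4 := levyM_nonneg ν (k := 4) (by decide) x
  calc _ ≤ t * (4 * |v / c| ^ 3 * √(levyM ν 2 x * levyM ν 4 x)) := by
        rw [hcenter, norm_mul, Complex.norm_real, Real.norm_of_nonneg ht.le]
        gcongr
        exact hν.norm_tiltedExponent_add_le x (v / c)
    _ = 4 * |v| ^ 3 * (t * √(levyM ν 2 x * levyM ν 4 x) / c ^ 3) := by
        rw [abs_div, abs_of_pos hcpos]
        field_simp
    _ ≤ _ := by
        gcongr
        refine Real.le_sqrt_of_sq_le (le_of_eq ?_)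
        rw [div_pow, mul_pow, Real.sq_sqrt (by positivity), ← pow_mul, mul_comm 3 2, pow_mul, hcsq]
        field_simp

end HasExpSqMoments

section SaddlePoint

variable {ι : Type*} {l : Filter ι} {ν : Measure ℝ} {t x : ι → ℝ}
  (hν : HasExpSqMoments ν) (hν0 : 0 < ν {0}ᶜ) (ht : ∀ᶠ i in l, 0 < t i)
  (hratio : Tendsto (fun i => levyM ν 4 (x i) / (t i * levyM ν 2 (x i) ^ 2)) l (nhds 0))
include hν hν0 ht hratio

lemma tendsto_cexp_mul_tiltedExponent_div_sqrt (v : ℝ) :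
    Tendsto (fun i => Complex.exp
        (t i * tiltedExponent ν (x i) (v / √(t i * levyM ν 2 (x i))))) l
      (nhds (Real.exp (-(1 / 2) * v ^ 2) : ℝ)) := by
  rw [Complex.ofReal_exp]
  refine (Complex.continuous_exp.tendsto _).comp (tendsto_iff_norm_sub_tendsto_zero.2 ?_)
  refine squeeze_zero' (Eventually.of_forall fun i => norm_nonneg _) ?_
    (by simpa using hratio.sqrt.const_mul (4 * |v| ^ 3))
  filter_upwards [ht] with i hti
  exact hν.norm_mul_tiltedExponent_div_sqrt_add_le hν0 hti v

lemma eventually_div_sqrt_mem_gaussianZone (v : ℝ) :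
    ∀ᶠ i in l, v / √(t i * levyM ν 2 (x i)) ∈ gaussianZone ν (x i) := by
  have hzero : Tendsto (fun i => 2 * v ^ 2 * (levyM ν 4 (x i) / (t i * levyM ν 2 (x i) ^ 2))) l
      (nhds 0) := by simpa using hratio.const_mul (2 * v ^ 2)
  filter_upwards [ht, hzero.eventually_lt_const one_pos] with i hti hi
  have h2 := hν.levyM_two_pos hν0 (x i)
  have h4 := hν.levyM_four_pos hν0 (x i)
  rw [← mul_div_assoc, div_lt_one (by positivity)] at hi
  rw [gaussianZone, mem_ofPred_eq, div_pow, Real.sq_sqrt (by positivity),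
    div_le_div_iff₀ (by positivity) (by positivity)]
  nlinarith

/-- Rescaling by `√(t M₂)` turns the integral over the Gaussian zone into one which converges,
dominatedly, to the Gaussian integral. -/
lemma tendsto_sqrt_mul_setIntegral_gaussianZone [l.IsCountablyGenerated] :
    Tendsto (fun i => (√(t i * levyM ν 2 (x i)) : ℂ) *
        ∫ w in gaussianZone ν (x i), Complex.exp (t i * tiltedExponent ν (x i) w)) l
      (nhds (√(2 * Real.pi) : ℝ)) := by
  have hmeas (i : ι) := measurableSet_gaussianZone ν (x i)
  have hrescale (i : ι) : (√(t i * levyM ν 2 (x i)) : ℂ) *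
        ∫ w in gaussianZone ν (x i), Complex.exp (t i * tiltedExponent ν (x i) w)
      = ∫ v : ℝ, (gaussianZone ν (x i)).indicator
          (fun w => Complex.exp (t i * tiltedExponent ν (x i) w))
          (v / √(t i * levyM ν 2 (x i))) := by
    rw [Measure.integral_comp_div, integral_indicator (hmeas i), abs_of_nonneg (Real.sqrt_nonneg _),
      Complex.real_smul]
  have hgauss : ((√(2 * Real.pi) : ℝ) : ℂ) = ∫ v : ℝ, (Real.exp (-(1 / 2) * v ^ 2) : ℂ) := by
    rw [integral_complex_ofReal, integral_gaussian, mul_comm, div_div_eq_mul_div, div_one]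
  simp_rw [hrescale, hgauss]
  refine tendsto_integral_filter_of_dominated_convergence
    (fun v => Real.exp (-(1 / 4) * v ^ 2)) (Eventually.of_forall fun i => ?_) ?_
    (integrable_exp_neg_mul_sq (by norm_num)) (Eventually.of_forall fun v => ?_)
  · have := hν.continuous_tiltedExponent (x i)
    have hcont : Continuous fun w => Complex.exp (t i * tiltedExponent ν (x i) w) := by fun_prop
    exact ((hcont.measurable.indicator (hmeas i)).comp
      (measurable_id.div_const _)).aestronglyMeasurable
  · filter_upwards [ht] with i hti
    exact Eventually.of_forall fun v => hν.norm_indicator_gaussianZone_div_sqrt_le hν0 hti v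
  · refine (tendsto_cexp_mul_tiltedExponent_div_sqrt hν hν0 ht hratio v).congr' ?_
    filter_upwards [eventually_div_sqrt_mem_gaussianZone hν hν0 ht hratio v] with i hi
    rw [indicator_of_mem hi]

lemma tendsto_sqrt_mul_integral_cexp_tiltedExponent [l.IsCountablyGenerated]
    (hint : ∀ᶠ i in l, Integrable (fun w => Complex.exp (t i * tiltedExponent ν (x i) w)))
    (htail : Tendsto (fun i => √(t i * levyM ν 2 (x i)) *
      ∫ w in (gaussianZone ν (x i))ᶜ, Real.exp (-(t i * damping ν (x i) w))) l (nhds 0)) :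
    Tendsto (fun i => (√(t i * levyM ν 2 (x i)) : ℂ) *
        ∫ w, Complex.exp (t i * tiltedExponent ν (x i) w)) l (nhds (√(2 * Real.pi) : ℝ)) := by
  have houter : Tendsto (fun i => (√(t i * levyM ν 2 (x i)) : ℂ) *
      ∫ w in (gaussianZone ν (x i))ᶜ, Complex.exp (t i * tiltedExponent ν (x i) w)) l
      (nhds 0) := by
    refine squeeze_zero_norm (fun i => ?_) htail
    rw [norm_mul, Complex.norm_real, Real.norm_of_nonneg (Real.sqrt_nonneg _)]
    gcongr
    simpa only [hν.norm_cexp_mul_tiltedExponent] using norm_integral_le_integral_norm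
      (μ := volume.restrict (gaussianZone ν (x i))ᶜ)
      (fun w => Complex.exp (t i * tiltedExponent ν (x i) w))
  have hsum := (tendsto_sqrt_mul_setIntegral_gaussianZone hν hν0 ht hratio).add houter
  rw [add_zero] at hsum
  refine hsum.congr' ?_
  filter_upwards [hint] with i hi
  rw [← mul_add, integral_add_compl (measurableSet_gaussianZone ν (x i)) hi]

end SaddlePoint

/-! ### Uniform saddle-point approximation -/

/-- Conditions on a Lévy measure `ν` under which the density of the convolution semigroup with
exponent `charExponent ν` has a saddle-point approximation uniformly in time and space. The first
lower bound on the damping makes the integrand negligible outside the Gaussian zone, the second one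
makes it integrable at infinity. -/
structure SaddlePointRegular (ν : Measure ℝ) : Prop where
  hasExpSqMoments : HasExpSqMoments ν
  measure_Ioi_pos : 0 < ν (Ioi 0)
  exp_mul_min_le_damping : ∃ c > 0, ∃ r > 0, ∀ x ≥ 0, ∀ w,
    c * Real.exp (r * x) * min 1 (w ^ 2) ≤ damping ν x w
  rpow_le_damping : ∃ c > 0, ∃ β > (0 : ℝ), ∀ x ≥ 0, ∀ w : ℝ, 1 ≤ |w| →
    c * |w| ^ β ≤ damping ν x w
  tendsto_levyM_four_div_sq : Tendsto (fun x => levyM ν 4 x / levyM ν 2 x ^ 2) atTop (nhds 0)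
  levyM_four_le : ∀ ε > 0, ∃ C > 0, ∀ x ≥ 0, levyM ν 4 x ≤ C * Real.exp (ε * x) * levyM ν 2 x
  levyM_two_le : ∀ ε > 0, ∃ C > 0, ∀ x ≥ 0, levyM ν 2 x ≤ C * Real.exp (C * Real.exp (ε * x))

lemma damping_nonneg (ν : Measure ℝ) (x w : ℝ) : 0 ≤ damping ν x w :=
  integral_nonneg fun v =>
    mul_nonneg (Real.exp_pos _).le (sub_nonneg.2 (Real.cos_le_one (w * v)))

lemma measure_compl_zero_pos_of_measure_Ioi_pos {ν : Measure ℝ} (hν : 0 < ν (Ioi 0)) :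
    0 < ν {0}ᶜ :=
  hν.trans_le (measure_mono fun _ hv => (mem_Ioi.1 hv).ne')

lemma HasExpSqMoments.exists_pos_le_levyM_two {ν : Measure ℝ} (hν : HasExpSqMoments ν)
    (hpos : 0 < ν (Ioi 0)) : ∃ m > 0, ∀ x ≥ 0, m ≤ levyM ν 2 x := by
  have hsq : Integrable (fun v : ℝ => v ^ 2) ν := by simpa using hν 0
  have hexp (x : ℝ) : Integrable (fun v : ℝ => v ^ 2 * Real.exp (x * v)) ν :=
    hν.integrable_levyIntegrand 2 x
  refine ⟨∫ v in Ioi 0, v ^ 2 ∂ν, ?_, fun x hx => ?_⟩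
  · rw [gt_iff_lt, setIntegral_pos_iff_support_of_nonneg_ae
      (Eventually.of_forall fun v => sq_nonneg v) hsq.integrableOn]
    exact hpos.trans_le (measure_mono fun v hv => ⟨(pow_pos hv 2).ne', hv⟩)
  · calc ∫ v in Ioi 0, v ^ 2 ∂ν ≤ ∫ v in Ioi 0, v ^ 2 * Real.exp (x * v) ∂ν :=
          setIntegral_mono_on hsq.integrableOn (hexp x).integrableOn measurableSet_Ioi
            fun v hv => le_mul_of_one_le_right (sq_nonneg v)
              (Real.one_le_exp (mul_nonneg hx (le_of_lt hv)))
      _ ≤ levyM ν 2 x := setIntegral_le_integral (hexp x) (Eventually.of_forall fun v =>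
          mul_nonneg (sq_nonneg v) (Real.exp_pos _).le)

namespace HasExpSqMoments

variable {ν : Measure ℝ} (hν : HasExpSqMoments ν)
include hν

lemma continuous_levyM_zero : Continuous (levyM ν 0) := by
  have heq : levyM ν 0 = fun η : ℝ => (charExponent ν (η * Complex.I)).re := by
    funext η
    have hzero : tiltedExponent ν η 0 = 0 := by simp [tiltedExponent, compensatedExp]
    simpa [hzero] using (congrArg Complex.re (hν.charExponent_add_mul_I η 0)).symm
  rw [heq]
  have := hν.differentiable_charExponent.continuous
  fun_prop

lemma mul_charExponent_add_mul_I (t y x w : ℝ) :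
    t * (Complex.I * y * (w + x * Complex.I) + charExponent ν (w + x * Complex.I))
      = (t * (-(y * x) + levyM ν 0 x) : ℝ) + (t * (y - levyM ν 1 x) * w : ℝ) * Complex.I
        + t * tiltedExponent ν x w := by
  rw [hν.charExponent_add_mul_I]
  push_cast
  linear_combination (t * y * x : ℂ) * Complex.I_sq

lemma norm_cexp_charExponent_add_mul_I (t y x w : ℝ) :
    ‖Complex.exp (t * (Complex.I * y * (w + x * Complex.I) + charExponent ν (w + x * Complex.I)))‖
      = Real.exp (t * (-(y * x) + levyM ν 0 x)) * Real.exp (-(t * damping ν x w)) := by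
  rw [hν.mul_charExponent_add_mul_I, Complex.exp_add, Complex.exp_add, norm_mul, norm_mul,
    hν.norm_cexp_mul_tiltedExponent, Complex.norm_exp_ofReal, Complex.norm_exp_ofReal_mul_I,
    mul_one]

end HasExpSqMoments

lemma exists_mul_sub_mul_exp_cube_le {κ C ε t₀ : ℝ} (hκ : 0 < κ) (hε : 0 < ε) (ht₀ : 0 < t₀) :
    ∃ A, ∃ q > 0, ∀ t ≥ t₀, ∀ x ≥ 0,
      κ * t / 2 + C * Real.exp (ε * x) - κ * t * Real.exp (ε * x) ^ 3 ≤ A - q * (t + x) := by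
  refine ⟨C ^ 2 / (κ * t₀), κ / 4 * min 1 (t₀ * ε),
    mul_pos (by positivity) (lt_min one_pos (by positivity)), fun t ht x hx => ?_⟩
  have hlin : 1 + ε * x ≤ Real.exp (ε * x) := by linarith [Real.add_one_le_exp (ε * x)]
  set E := Real.exp (ε * x)
  have ht' : 0 < t := ht₀.trans_le ht
  have hE : 1 ≤ E := by nlinarith [mul_nonneg hε.le hx]
  have hE₂ : E ≤ E ^ 3 := le_self_pow₀ hE (by norm_num)
  have hE₃ : 1 ≤ E ^ 3 := hE.trans hE₂
  have hCE : C * E ≤ κ / 4 * (t * E ^ 3) + C ^ 2 / (κ * t₀) := by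
    have hamgm : C * E ≤ κ * t₀ / 4 * E ^ 2 + C ^ 2 / (κ * t₀) := by
      have hsq : κ * t₀ / 4 * E ^ 2 + C ^ 2 / (κ * t₀) - C * E
          = (κ * t₀ * E - 2 * C) ^ 2 / (4 * (κ * t₀)) := by
        field_simp
        ring
      have : 0 ≤ (κ * t₀ * E - 2 * C) ^ 2 / (4 * (κ * t₀)) := by positivity
      linarith
    have : t₀ * E ^ 2 ≤ t * E ^ 3 :=
      mul_le_mul ht (pow_le_pow_right₀ hE (by norm_num)) (by positivity) ht'.le
    nlinarith
  have hgrowth : min 1 (t₀ * ε) * (t + x) ≤ t * E ^ 3 :=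
    calc min 1 (t₀ * ε) * (t + x) ≤ 1 * t + t₀ * ε * x := by
          rw [mul_add]
          gcongr
          · exact min_le_left _ _
          · exact min_le_right _ _
      _ ≤ t * (1 + ε * x) := by nlinarith [mul_nonneg hε.le hx]
      _ ≤ t * E ^ 3 := by gcongr; exact hlin.trans hE₂
  have htE : t ≤ t * E ^ 3 := le_mul_of_one_le_right ht'.le hE₃
  linarith [mul_le_mul_of_nonneg_left hgrowth hκ.le, mul_le_mul_of_nonneg_left htE hκ.le]

namespace SaddlePointRegular

variable {ν : Measure ℝ} (h : SaddlePointRegular ν)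
include h

lemma exists_exp_neg_mul_damping_le : ∃ c > 0, ∃ β > (0 : ℝ), ∀ t ≥ 0, ∀ x ≥ 0, ∀ w : ℝ,
    Real.exp (-(t * damping ν x w)) ≤ Real.exp (t * c) * Real.exp (-(t * c * |w| ^ β)) := by
  obtain ⟨c, hc, β, hβ, hle⟩ := h.rpow_le_damping
  refine ⟨c, hc, β, hβ, fun t ht x hx w => ?_⟩
  have hpow : c * (|w| ^ β - 1) ≤ damping ν x w := by
    rcases le_or_gt 1 |w| with hw | hw
    · linarith [hle x hx w hw]
    · have : |w| ^ β ≤ 1 := Real.rpow_le_one (abs_nonneg _) hw.le hβ.le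
      nlinarith [damping_nonneg ν x w]
  rw [← Real.exp_add]
  refine Real.exp_le_exp.2 ?_
  linarith [mul_le_mul_of_nonneg_left hpow ht]

lemma integrable_cexp_mul_tiltedExponent {t x : ℝ} (ht : 0 < t) (hx : 0 ≤ x) :
    Integrable (fun w => Complex.exp (t * tiltedExponent ν x w)) := by
  obtain ⟨c, hc, β, hβ, hle⟩ := h.exists_exp_neg_mul_damping_le
  have := h.hasExpSqMoments.continuous_tiltedExponent x
  refine ((integrable_exp_neg_mul_abs_rpow (mul_pos ht hc) hβ).const_mul (Real.exp (t * c))).mono'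
    (by fun_prop) (Eventually.of_forall fun w => ?_)
  rw [h.hasExpSqMoments.norm_cexp_mul_tiltedExponent]
  exact hle t ht.le x hx w

lemma exists_norm_cexp_charExponent_le {t : ℝ} (x y : ℝ) (ht : 0 ≤ t) (hx : 0 ≤ x) :
    ∃ B, ∃ c > 0, ∃ β > (0 : ℝ), ∀ w : ℝ, ∀ η ∈ uIcc 0 x,
      ‖Complex.exp (t * (Complex.I * y * (w + η * Complex.I)
        + charExponent ν (w + η * Complex.I)))‖ ≤ B * Real.exp (-(t * c * |w| ^ β)) := by
  have hν := h.hasExpSqMoments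
  obtain ⟨c, hc, β, hβ, hle⟩ := h.exists_exp_neg_mul_damping_le
  have hcont : Continuous fun η => Real.exp (t * (-(y * η) + levyM ν 0 η)) := by
    have := hν.continuous_levyM_zero
    fun_prop
  obtain ⟨B, hB⟩ := (isCompact_uIcc (a := 0) (b := x)).exists_bound_of_continuousOn
    hcont.continuousOn
  refine ⟨B * Real.exp (t * c), c, hc, β, hβ, fun w η hη => ?_⟩
  have hη0 : 0 ≤ η := (uIcc_of_le hx ▸ hη).1
  have hBη := (Real.le_norm_self _).trans (hB η hη)
  rw [hν.norm_cexp_charExponent_add_mul_I, mul_assoc]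
  gcongr
  · exact (Real.exp_pos _).le.trans hBη
  · exact hle t ht η hη0 w

/-- The point `x` is the critical point on the imaginary axis: there the linear term of the shifted
exponent vanishes. -/
lemma integral_cexp_charExponent {t x : ℝ} (ht : 0 < t) (hx : 0 ≤ x) :
    ∫ w : ℝ, Complex.exp (t * (Complex.I * levyM ν 1 x * w + charExponent ν w))
      = Real.exp (t * (-(levyM ν 1 x * x) + levyM ν 0 x))
        * ∫ w : ℝ, Complex.exp (t * tiltedExponent ν x w) := by
  have hν := h.hasExpSqMoments
  obtain ⟨B, c, hc, β, hβ, hle⟩ := h.exists_norm_cexp_charExponent_le x (levyM ν 1 x) ht.le hx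
  have htc : 0 < t * c := mul_pos ht hc
  have hdecay {l : Filter ℝ} (hl : Tendsto (fun w : ℝ => |w|) l atTop) :
      Tendsto (fun w : ℝ => B * Real.exp (-(t * c * |w| ^ β))) l (nhds 0) := by
    simpa using (tendsto_exp_neg_mul_abs_rpow htc hβ hl).const_mul B
  have hdiff : Differentiable ℂ fun z : ℂ =>
      Complex.exp (t * (Complex.I * levyM ν 1 x * z + charExponent ν z)) := by
    have := hν.differentiable_charExponent
    fun_prop
  rw [integral_eq_integral_add_mul_I hdiff ((integrable_exp_neg_mul_abs_rpow htc hβ).const_mul B)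
    (hdecay tendsto_abs_atTop_atTop) (hdecay tendsto_abs_atBot_atTop) hle, ← integral_const_mul]
  refine integral_congr_ae (Eventually.of_forall fun w => ?_)
  simp only
  rw [hν.mul_charExponent_add_mul_I, Complex.exp_add, Complex.exp_add, sub_self, mul_zero, zero_mul,
    Complex.ofReal_zero, zero_mul, Complex.exp_zero, mul_one, Complex.ofReal_exp]

lemma exists_le_damping_of_notMem_gaussianZone : ∃ κ > 0, ∃ ε > 0, ∀ x ≥ 0,
    ∀ w ∉ gaussianZone ν x, κ * Real.exp (ε * x) ^ 3 ≤ damping ν x w := by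
  have hν := h.hasExpSqMoments
  have hν0 := measure_compl_zero_pos_of_measure_Ioi_pos h.measure_Ioi_pos
  obtain ⟨c, hc, r, hr, hle⟩ := h.exp_mul_min_le_damping
  obtain ⟨C, hC, hM4⟩ := h.levyM_four_le (r / 4) (by positivity)
  have : 0 < min 1 (1 / (2 * C)) := lt_min one_pos (by positivity)
  refine ⟨c * min 1 (1 / (2 * C)), by positivity, r / 4, by positivity, fun x hx w hw => ?_⟩
  have hE : 1 ≤ Real.exp (r / 4 * x) := Real.one_le_exp (by positivity)
  have hE₄ : Real.exp (r * x) = Real.exp (r / 4 * x) ^ 4 := by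
    rw [← Real.exp_nat_mul]
    congr 1
    push_cast
    ring
  have hM4x := hM4 x hx
  set E := Real.exp (r / 4 * x)
  have := hν.levyM_two_pos hν0 x
  have h4 := hν.levyM_four_pos hν0 x
  have hzone : 1 / (2 * C) ≤ E * w ^ 2 :=
    calc 1 / (2 * C) ≤ E * (levyM ν 2 x / (2 * levyM ν 4 x)) := by
          rw [← mul_div_assoc, div_le_div_iff₀ (by positivity) (by positivity)]
          linarith
      _ ≤ E * w ^ 2 := by
          gcongr
          exact (not_le.1 hw).le
  have hmin : min 1 (1 / (2 * C)) ≤ E * min 1 (w ^ 2) := by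
    rw [mul_min_of_nonneg _ _ (by positivity), mul_one]
    exact min_le_min hE hzone
  calc c * min 1 (1 / (2 * C)) * E ^ 3 ≤ c * (E * min 1 (w ^ 2)) * E ^ 3 := by gcongr
    _ = c * Real.exp (r * x) * min 1 (w ^ 2) := by rw [hE₄]; ring
    _ ≤ damping ν x w := hle x hx w

lemma exists_setIntegral_compl_gaussianZone_le {t₀ : ℝ} (ht₀ : 0 < t₀) :
    ∃ κ > 0, ∃ ε > 0, ∃ K ≥ 0, ∀ t ≥ t₀, ∀ x ≥ 0,
      ∫ w in (gaussianZone ν x)ᶜ, Real.exp (-(t * damping ν x w))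
        ≤ Real.exp (-(κ * t * Real.exp (ε * x) ^ 3)) * K := by
  obtain ⟨c, hc, β, hβ, hdecay⟩ := h.exists_exp_neg_mul_damping_le
  obtain ⟨κ, hκ, ε, hε, hzone⟩ := h.exists_le_damping_of_notMem_gaussianZone
  set g : ℝ → ℝ := fun w => Real.exp (t₀ / 2 * c) * Real.exp (-(t₀ / 2 * c * |w| ^ β))
  have hg_int : Integrable g :=
    (integrable_exp_neg_mul_abs_rpow (mul_pos (half_pos ht₀) hc) hβ).const_mul _
  refine ⟨κ / 2, by positivity, ε, hε, ∫ w, g w, integral_nonneg fun w => by positivity,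
    fun t ht x hx => ?_⟩
  have ht' : 0 < t := ht₀.trans_le ht
  have hexp_int : Integrable (fun w => Real.exp (-(t * damping ν x w))) := by
    simpa only [h.hasExpSqMoments.norm_cexp_mul_tiltedExponent]
      using (h.integrable_cexp_mul_tiltedExponent ht' hx).norm
  have hbound : ∀ w ∈ (gaussianZone ν x)ᶜ, Real.exp (-(t * damping ν x w))
      ≤ Real.exp (-(κ / 2 * t * Real.exp (ε * x) ^ 3)) * g w := by
    -- half of the damping produces the small factor, the other half the integrability
    intro w hw
    have hsmall := mul_le_mul_of_nonneg_left (hzone x hx w hw) (half_pos ht').le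
    have hhalf : t₀ / 2 * damping ν x w ≤ t / 2 * damping ν x w := by
      gcongr
      exact damping_nonneg ν x w
    refine le_trans ?_
      (mul_le_mul_of_nonneg_left (hdecay (t₀ / 2) (by positivity) x hx w) (Real.exp_pos _).le)
    rw [← Real.exp_add]
    exact Real.exp_le_exp.2 (by linarith)
  calc ∫ w in (gaussianZone ν x)ᶜ, Real.exp (-(t * damping ν x w))
      ≤ ∫ w in (gaussianZone ν x)ᶜ, Real.exp (-(κ / 2 * t * Real.exp (ε * x) ^ 3)) * g w :=
        setIntegral_mono_on hexp_int.integrableOn (hg_int.const_mul _).integrableOn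
          (measurableSet_gaussianZone ν x).compl hbound
    _ ≤ ∫ w, Real.exp (-(κ / 2 * t * Real.exp (ε * x) ^ 3)) * g w :=
        setIntegral_le_integral (hg_int.const_mul _) (Eventually.of_forall fun w => by positivity)
    _ = Real.exp (-(κ / 2 * t * Real.exp (ε * x) ^ 3)) * ∫ w, g w := integral_const_mul _ _

lemma exists_sqrt_mul_levyM_two_le {κ ε : ℝ} (hκ : 0 < κ) (hε : 0 < ε) :
    ∃ A ≥ 0, ∃ C, ∀ t ≥ 0, ∀ x ≥ 0,
      √(t * levyM ν 2 x) ≤ A * Real.exp (κ * t / 2 + C * Real.exp (ε * x)) := by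
  obtain ⟨C, hC, hM2⟩ := h.levyM_two_le ε hε
  refine ⟨1 + 2 * C / κ, by positivity, C, fun t ht x hx => ?_⟩
  have h2 : 0 ≤ levyM ν 2 x := levyM_nonneg ν even_two x
  have hsqrt : √(t * levyM ν 2 x) ≤ 1 + t * levyM ν 2 x :=
    Real.sqrt_le_iff.2 ⟨by positivity, by nlinarith [mul_nonneg ht h2]⟩
  have htexp : t ≤ 2 / κ * Real.exp (κ * t / 2) := by
    rw [div_mul_eq_mul_div, le_div_iff₀ hκ]
    linarith [Real.add_one_le_exp (κ * t / 2)]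
  have hprod : t * levyM ν 2 x ≤ 2 * C / κ * Real.exp (κ * t / 2 + C * Real.exp (ε * x)) :=
    calc t * levyM ν 2 x
        ≤ (2 / κ * Real.exp (κ * t / 2)) * (C * Real.exp (C * Real.exp (ε * x))) := by
          gcongr
          exact hM2 x hx
      _ = 2 * C / κ * Real.exp (κ * t / 2 + C * Real.exp (ε * x)) := by
          rw [Real.exp_add]
          ring
  have hone : 1 ≤ Real.exp (κ * t / 2 + C * Real.exp (ε * x)) := Real.one_le_exp (by positivity)
  linarith

lemma exists_levyM_four_div_sq_le : ∃ B, ∀ x ≥ 0, levyM ν 4 x / levyM ν 2 x ^ 2 ≤ B := by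
  obtain ⟨m, hm, hmle⟩ := h.hasExpSqMoments.exists_pos_le_levyM_two h.measure_Ioi_pos
  obtain ⟨C, hC, hM4⟩ := h.levyM_four_le 1 one_pos
  obtain ⟨Z, hZ⟩ := eventually_atTop.1
    (h.tendsto_levyM_four_div_sq.eventually_lt_const one_pos)
  refine ⟨max 1 (C * Real.exp Z / m), fun x hx => ?_⟩
  rcases le_or_gt Z x with hZx | hZx
  · exact (hZ x hZx).le.trans (le_max_left _ _)
  · refine le_trans ?_ (le_max_right _ _)
    have h2 := hm.trans_le (hmle x hx)
    calc levyM ν 4 x / levyM ν 2 x ^ 2 ≤ C * Real.exp Z * levyM ν 2 x / levyM ν 2 x ^ 2 := by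
          gcongr
          refine (hM4 x hx).trans ?_
          gcongr
          linarith
      _ = C * Real.exp Z / levyM ν 2 x := by field_simp
      _ ≤ C * Real.exp Z / m := by gcongr; exact hmle x hx

section Limit

variable {ι : Type*} {l : Filter ι} {t x : ι → ℝ} {t₀ : ℝ} (ht₀ : 0 < t₀)
  (ht : ∀ᶠ i in l, t₀ ≤ t i) (hx : ∀ᶠ i in l, 0 ≤ x i)
  (hinf : Tendsto (fun i => t i + x i) l atTop)
include ht₀ ht hx hinf

lemma tendsto_sqrt_mul_setIntegral_compl_gaussianZone :
    Tendsto (fun i => √(t i * levyM ν 2 (x i)) *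
      ∫ w in (gaussianZone ν (x i))ᶜ, Real.exp (-(t i * damping ν (x i) w))) l (nhds 0) := by
  obtain ⟨κ, hκ, ε, hε, K, hK, hint⟩ := h.exists_setIntegral_compl_gaussianZone_le ht₀
  obtain ⟨A, hA, C, hsqrt⟩ := h.exists_sqrt_mul_levyM_two_le hκ hε
  obtain ⟨B, q, hq, hexp⟩ := exists_mul_sub_mul_exp_cube_le (C := C) hκ hε ht₀
  have hzero : Tendsto (fun i => A * K * (Real.exp B * Real.exp (-(q * (t i + x i))))) l
      (nhds 0) := by
    simpa using ((Real.tendsto_exp_neg_atTop_nhds_zero.comp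
      (hinf.const_mul_atTop hq)).const_mul (Real.exp B)).const_mul (A * K)
  refine squeeze_zero' (Eventually.of_forall fun i => mul_nonneg (Real.sqrt_nonneg _)
    (integral_nonneg fun w => (Real.exp_pos _).le)) ?_ hzero
  filter_upwards [ht, hx] with i hti hxi
  calc √(t i * levyM ν 2 (x i)) *
        ∫ w in (gaussianZone ν (x i))ᶜ, Real.exp (-(t i * damping ν (x i) w))
      ≤ (A * Real.exp (κ * t i / 2 + C * Real.exp (ε * x i))) *
          (Real.exp (-(κ * t i * Real.exp (ε * x i) ^ 3)) * K) :=
        mul_le_mul (hsqrt _ (ht₀.le.trans hti) _ hxi) (hint _ hti _ hxi)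
          (integral_nonneg fun w => (Real.exp_pos _).le) (by positivity)
    _ = A * K * Real.exp (κ * t i / 2 + C * Real.exp (ε * x i)
          - κ * t i * Real.exp (ε * x i) ^ 3) := by
        rw [sub_eq_add_neg, Real.exp_add (κ * t i / 2 + C * Real.exp (ε * x i))]
        ring
    _ ≤ A * K * Real.exp (B - q * (t i + x i)) := by
        gcongr A * K * Real.exp ?_
        exact hexp _ hti _ hxi
    _ = A * K * (Real.exp B * Real.exp (-(q * (t i + x i)))) := by
        rw [sub_eq_add_neg, Real.exp_add]

lemma tendsto_levyM_four_div_mul_sq :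
    Tendsto (fun i => levyM ν 4 (x i) / (t i * levyM ν 2 (x i) ^ 2)) l (nhds 0) := by
  obtain ⟨B, hB⟩ := h.exists_levyM_four_div_sq_le
  rw [Metric.tendsto_nhds]
  intro ε hε
  obtain ⟨Z, hZ⟩ := eventually_atTop.1
    (h.tendsto_levyM_four_div_sq.eventually_lt_const (mul_pos hε ht₀))
  filter_upwards [ht, hx, hinf.eventually_gt_atTop (B / ε + Z)] with i hti hxi hi
  have hti' : 0 < t i := ht₀.trans_le hti
  have h4 := levyM_nonneg ν (k := 4) (by decide) (x i)
  rw [Real.dist_0_eq_abs, abs_of_nonneg (by positivity), mul_comm, ← div_div, div_lt_iff₀ hti']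
  rcases le_or_gt Z (x i) with hZi | hZi
  · exact (hZ _ hZi).trans_le (by gcongr)
  · have hBt : B / ε < t i := by linarith
    exact (hB _ hxi).trans_lt (by rwa [div_lt_iff₀' hε] at hBt)

theorem tendsto_sqrt_mul_integral [l.IsCountablyGenerated] :
    Tendsto (fun i => (√(t i * levyM ν 2 (x i)) : ℂ) *
      ∫ w, Complex.exp (t i * tiltedExponent ν (x i) w)) l (nhds (√(2 * Real.pi) : ℝ)) := by
  have ht' : ∀ᶠ i in l, 0 < t i := ht.mono fun i => ht₀.trans_le
  refine tendsto_sqrt_mul_integral_cexp_tiltedExponent h.hasExpSqMoments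
    (measure_compl_zero_pos_of_measure_Ioi_pos h.measure_Ioi_pos) ht'
    (h.tendsto_levyM_four_div_mul_sq ht₀ ht hx hinf) ?_
    (h.tendsto_sqrt_mul_setIntegral_compl_gaussianZone ht₀ ht hx hinf)
  filter_upwards [ht', hx] with i hti hxi using h.integrable_cexp_mul_tiltedExponent hti hxi

end Limit

end SaddlePointRegular

/-! ### The kernel of the fractional Lévy motion -/

lemma rpow_le_rpow_add_mul_sub {α x y : ℝ} (hα₀ : 0 ≤ α) (hα₁ : α ≤ 1) (hx : 0 < x) (hy : 0 ≤ y) :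
    y ^ α ≤ x ^ α + α * x ^ (α - 1) * (y - x) := by
  have hone : 1 + (y - x) / x = y / x := by field_simp; ring
  have hbern := rpow_one_add_le_one_add_mul_self (s := (y - x) / x) (p := α)
    (by linarith [div_nonneg hy hx.le]) hα₀ hα₁
  rw [hone, Real.div_rpow hy hx.le, div_le_iff₀ (Real.rpow_pos_of_pos hx α)] at hbern
  refine hbern.trans_eq ?_
  rw [Real.rpow_sub_one hx.ne']
  ring

lemma exists_le_integral_one_sub_cos_mul_one_sub_rpow {α : ℝ} (hα₀ : 0 < α) (hα₁ : α ≤ 1) :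
    ∃ κ > 0, ∃ d > 0, ∀ l : ℝ, κ * min 1 ((l * d) ^ 2)
      ≤ ∫ s in (0 : ℝ)..(1 / 2), (1 - Real.cos (l * (1 - s) ^ α)) := by
  set g : ℝ → ℝ := fun s => (1 - s) ^ α
  have hlt : g (1 / 2) < g 0 := Real.rpow_lt_rpow (by norm_num) (by norm_num) hα₀
  have hderiv : ∀ s ∈ Icc (0 : ℝ) (1 / 2), HasDerivAt g (-(α * (1 - s) ^ (α - 1))) s := by
    intro s hs
    have hs1 : 1 - s ≠ 0 := by linarith [hs.2]
    refine (((hasDerivAt_id s).const_sub 1).rpow_const (Or.inl hs1)).congr_deriv ?_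
    simp only [id_eq]
    ring
  have hcont : ContinuousOn (fun s : ℝ => -(α * (1 - s) ^ (α - 1))) (Icc 0 (1 / 2)) := by
    refine (continuousOn_const.mul ?_).neg
    exact ContinuousOn.rpow_const (by fun_prop) fun s hs => Or.inl (by linarith [hs.2])
  have hbound : ∀ s ∈ Icc (0 : ℝ) (1 / 2),
      -(-(α * (1 - s) ^ (α - 1))) ≤ α * (1 / 2 : ℝ) ^ (α - 1) := fun s hs => by
    rw [neg_neg]
    gcongr α * ?_
    exact Real.rpow_le_rpow_of_nonpos (by norm_num) (by linarith [hs.2]) (by linarith)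
  have : 0 < g 0 - g (1 / 2) := sub_pos.2 hlt
  refine ⟨(g 0 - g (1 / 2)) / (α * (1 / 2 : ℝ) ^ (α - 1)) / 40, by positivity,
    (g 0 - g (1 / 2)) / 2, by positivity, fun l => ?_⟩
  refine le_of_eq_of_le ?_
    (le_integral_one_sub_cos_comp (by norm_num) (by positivity) hderiv hcont hbound hlt l)
  rw [mul_div_assoc l]
  ring

section FracKernel

variable {H : ℝ}

lemma Gamma_add_half_pos (hH : 1 / 2 < H) : 0 < Real.Gamma (H + 1 / 2) :=
  Real.Gamma_pos_of_pos (by linarith)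

lemma continuous_fracKernel (hH : 1 / 2 < H) : Continuous (fracKernel H) := by
  unfold fracKernel
  refine Continuous.div_const (Continuous.sub ?_ ?_) _ <;>
    exact Continuous.rpow_const (by fun_prop) fun _ => Or.inr (by linarith)

lemma fracKernel_nonneg (hH : 1 / 2 < H) (s : ℝ) : 0 ≤ fracKernel H s := by
  refine div_nonneg (sub_nonneg.2 ?_) (Gamma_add_half_pos hH).le
  exact Real.rpow_le_rpow (le_max_right _ _) (max_le_max (by linarith) le_rfl) (by linarith)

lemma fracKernel_le (hH : H ∈ Ioo (1 / 2 : ℝ) 1) (s : ℝ) :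
    fracKernel H s ≤ 1 / Real.Gamma (H + 1 / 2) := by
  refine div_le_div_of_nonneg_right ?_ (Gamma_add_half_pos hH.1).le
  have hα : 0 ≤ H - 1 / 2 := by linarith [hH.1]
  have hmax : max (1 - s) 0 ≤ max (-s) 0 + 1 :=
    max_le (by linarith [le_max_left (-s) 0]) (by linarith [le_max_right (-s) 0])
  have hmono := Real.rpow_le_rpow (le_max_right (1 - s) 0) hmax hα
  have hsub := Real.rpow_add_le_add_rpow (le_max_right (-s) 0) zero_le_one hα (by linarith [hH.2])
  rw [Real.one_rpow] at hsub
  linarith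

lemma fracKernel_of_one_le {s : ℝ} (hs : 1 ≤ s) : fracKernel H s = 0 := by
  rw [fracKernel, max_eq_right (by linarith), max_eq_right (by linarith), sub_self, zero_div]

lemma fracKernel_of_mem_Icc (hH : 1 / 2 < H) {s : ℝ} (hs : s ∈ Icc (0 : ℝ) 1) :
    fracKernel H s = (1 - s) ^ (H - 1 / 2) / Real.Gamma (H + 1 / 2) := by
  rw [fracKernel, max_eq_left (by linarith [hs.2]), max_eq_right (by linarith [hs.1]),
    Real.zero_rpow (by linarith), sub_zero]

lemma fracKernel_of_neg {s : ℝ} (hs : s < 0) :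
    fracKernel H s = ((1 - s) ^ (H - 1 / 2) - (-s) ^ (H - 1 / 2)) / Real.Gamma (H + 1 / 2) := by
  rw [fracKernel, max_eq_left (by linarith), max_eq_left (by linarith)]

lemma fracKernel_le_of_neg (hH : H ∈ Ioo (1 / 2 : ℝ) 1) {s : ℝ} (hs : s < 0) :
    fracKernel H s ≤ (H - 1 / 2) * (-s) ^ (H - 1 / 2 - 1) / Real.Gamma (H + 1 / 2) := by
  rw [fracKernel_of_neg hs]
  refine div_le_div_of_nonneg_right ?_ (Gamma_add_half_pos hH.1).le
  have := rpow_le_rpow_add_mul_sub (α := H - 1 / 2) (x := -s) (y := 1 - s) (by linarith [hH.1])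
    (by linarith [hH.2]) (by linarith) (by linarith)
  linarith

lemma le_fracKernel_of_neg (hH : H ∈ Ioo (1 / 2 : ℝ) 1) {s : ℝ} (hs : s < 0) :
    (H - 1 / 2) * (1 - s) ^ (H - 1 / 2 - 1) / Real.Gamma (H + 1 / 2) ≤ fracKernel H s := by
  rw [fracKernel_of_neg hs]
  refine div_le_div_of_nonneg_right ?_ (Gamma_add_half_pos hH.1).le
  have := rpow_le_rpow_add_mul_sub (α := H - 1 / 2) (x := 1 - s) (y := -s) (by linarith [hH.1])
    (by linarith [hH.2]) (by linarith) (by linarith)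
  linarith

lemma integrable_fracKernel_sq (hH : H ∈ Ioo (1 / 2 : ℝ) 1) :
    Integrable (fun s => fracKernel H s ^ 2) := by
  have hcont : Continuous fun s => fracKernel H s ^ 2 := (continuous_fracKernel hH.1).pow 2
  set c := (H - 1 / 2) / Real.Gamma (H + 1 / 2)
  have hleft : IntegrableOn (fun s => fracKernel H s ^ 2) (Iio (-1)) := by
    have hpow : IntegrableOn (fun r : ℝ => c ^ 2 * r ^ (2 * H - 3)) (Ioi 1) :=
      (integrableOn_Ioi_rpow_of_lt (by linarith [hH.2]) one_pos).const_mul _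
    have hrefl := ((Measure.measurePreserving_neg volume).integrableOn_comp_preimage
      (Homeomorph.neg ℝ).measurableEmbedding).2 hpow
    rw [neg_preimage, neg_Ioi] at hrefl
    refine hrefl.mono' hcont.aestronglyMeasurable
      ((ae_restrict_iff' measurableSet_Iio).2 (Eventually.of_forall fun s hs => ?_))
    have hs0 : 0 < -s := by linarith [mem_Iio.1 hs]
    calc ‖fracKernel H s ^ 2‖ = fracKernel H s ^ 2 := Real.norm_of_nonneg (sq_nonneg _)
      _ ≤ (c * (-s) ^ (H - 1 / 2 - 1)) ^ 2 :=
        pow_le_pow_left₀ (fracKernel_nonneg hH.1 s)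
          ((fracKernel_le_of_neg hH (neg_pos.1 hs0)).trans_eq (mul_div_right_comm _ _ _)) 2
      _ = c ^ 2 * (-s) ^ (2 * H - 3) := by
        rw [mul_pow, ← Real.rpow_mul_natCast hs0.le]
        congr 2
        push_cast
        ring
  have hright : IntegrableOn (fun s => fracKernel H s ^ 2) (Ioi 1) :=
    integrableOn_zero.congr_fun (fun s hs => by
      rw [fracKernel_of_one_le (le_of_lt hs), zero_pow two_ne_zero]) measurableSet_Ioi
  rw [← integrableOn_univ, ← Iio_union_Ici (a := (-1 : ℝ)), ← Icc_union_Ioi_eq_Ici (b := 1)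
    (by norm_num)]
  exact hleft.union (hcont.integrableOn_Icc.union hright)

lemma fracKernel_half_pos (hH : 1 / 2 < H) : 0 < fracKernel H (1 / 2) := by
  rw [fracKernel_of_mem_Icc hH ⟨by norm_num, by norm_num⟩]
  exact div_pos (Real.rpow_pos_of_pos (by norm_num) _) (Gamma_add_half_pos hH)

lemma fracKernel_half_le (hH : 1 / 2 < H) {s : ℝ} (hs : s ∈ Icc (0 : ℝ) (1 / 2)) :
    fracKernel H (1 / 2) ≤ fracKernel H s := by
  rw [fracKernel_of_mem_Icc hH ⟨by norm_num, by norm_num⟩,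
    fracKernel_of_mem_Icc hH ⟨hs.1, by linarith [hs.2]⟩]
  refine div_le_div_of_nonneg_right ?_ (Gamma_add_half_pos hH).le
  exact Real.rpow_le_rpow (by norm_num) (by linarith [hs.2]) (by linarith)

lemma exists_le_integral_one_sub_cos_mul_fracKernel (hH : H ∈ Ioo (1 / 2 : ℝ) 1) :
    ∃ κ > 0, ∃ d > 0, ∀ l : ℝ, κ * min 1 ((l * d) ^ 2)
      ≤ ∫ s in Icc (0 : ℝ) (1 / 2), (1 - Real.cos (l * fracKernel H s)) := by
  have hΓ := Gamma_add_half_pos hH.1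
  obtain ⟨κ, hκ, d, hd, hosc⟩ := exists_le_integral_one_sub_cos_mul_one_sub_rpow
    (α := H - 1 / 2) (by linarith [hH.1]) (by linarith [hH.2])
  refine ⟨κ, hκ, d / Real.Gamma (H + 1 / 2), by positivity, fun l => ?_⟩
  have hcongr : ∫ s in Icc (0 : ℝ) (1 / 2), (1 - Real.cos (l * fracKernel H s))
      = ∫ s in (0 : ℝ)..(1 / 2),
          (1 - Real.cos (l / Real.Gamma (H + 1 / 2) * (1 - s) ^ (H - 1 / 2))) := by
    rw [intervalIntegral.integral_of_le (by norm_num), ← integral_Icc_eq_integral_Ioc]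
    refine setIntegral_congr_fun measurableSet_Icc fun s hs => ?_
    simp only [fracKernel_of_mem_Icc hH.1 ⟨hs.1, hs.2.trans (by norm_num)⟩, mul_comm_div]
  rw [hcongr, ← mul_div_assoc, mul_div_right_comm]
  exact hosc _

lemma fracKernelT_eq_rpow_mul (H : ℝ) {t : ℝ} (ht : 0 < t) (s : ℝ) :
    fracKernelT H t s = t ^ (H - 1 / 2) * fracKernel H (s / t) := by
  have hleft : max (t - s) 0 = t * max (1 - s / t) 0 := by
    rw [mul_max_of_nonneg _ _ ht.le, mul_zero, mul_sub, mul_one, mul_div_cancel₀ _ ht.ne']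
  have hright : max (-s) 0 = t * max (-(s / t)) 0 := by
    rw [mul_max_of_nonneg _ _ ht.le, mul_zero, mul_neg, mul_div_cancel₀ _ ht.ne']
  rw [fracKernelT, fracKernel, hleft, hright, Real.mul_rpow ht.le (le_max_right _ _),
    Real.mul_rpow ht.le (le_max_right _ _)]
  ring

end FracKernel

/-! ### Lévy measures and their transforms by a kernel -/

lemma sigmaFinite_of_integrable_of_ae_ne_zero {α : Type*} [MeasurableSpace α] {μ : Measure α}
    {g : α → ℝ} (hg : Integrable g μ) (hne : ∀ᵐ a ∂μ, g a ≠ 0) : SigmaFinite μ := by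
  obtain ⟨S, hS, hzero, hfin⟩ := hg.aefinStronglyMeasurable.exists_set_sigmaFinite
  have hmem : ∀ᵐ a ∂μ, a ∈ S := by
    filter_upwards [hne, (ae_restrict_iff' hS.compl).1 hzero] with a ha hSa
    exact not_not.1 fun h => ha (hSa h)
  rwa [Measure.restrict_eq_self_of_ae_mem hmem] at hfin

lemma sigmaFinite_of_integrable_min_one_sq {μ : Measure ℝ} (hμ0 : μ {0} = 0)
    (hμint : Integrable (fun u : ℝ => min 1 (u ^ 2)) μ) : SigmaFinite μ := by
  refine sigmaFinite_of_integrable_of_ae_ne_zero hμint ?_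
  filter_upwards [compl_mem_ae_iff.2 hμ0] with u hu
  exact (lt_min one_pos (sq_pos_of_ne_zero hu)).ne'

lemma sq_mul_exp_mul_abs_le (C v : ℝ) : v ^ 2 * Real.exp (C * |v|)
    ≤ 2 * (Real.exp ((|C| + 1) * v) + Real.exp (-(|C| + 1) * v)) := by
  have hsq : v ^ 2 ≤ 2 * Real.exp |v| := by
    have := Real.quadratic_le_exp_of_nonneg (abs_nonneg v)
    nlinarith [abs_nonneg v, sq_abs v]
  have habs : Real.exp ((|C| + 1) * |v|)
      ≤ Real.exp ((|C| + 1) * v) + Real.exp (-(|C| + 1) * v) := by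
    rcases abs_cases v with ⟨hv, _⟩ | ⟨hv, _⟩
    · rw [hv]
      exact le_add_of_nonneg_right (Real.exp_pos _).le
    · rw [hv, mul_neg, ← neg_mul]
      exact le_add_of_nonneg_left (Real.exp_pos _).le
  calc v ^ 2 * Real.exp (C * |v|) ≤ (2 * Real.exp |v|) * Real.exp (|C| * |v|) := by
        gcongr
        exact le_abs_self C
    _ = 2 * Real.exp ((|C| + 1) * |v|) := by
        rw [mul_assoc, ← Real.exp_add]
        ring_nf
    _ ≤ 2 * (Real.exp ((|C| + 1) * v) + Real.exp (-(|C| + 1) * v)) := by gcongr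

lemma hasExpSqMoments_of_integrable {μ : Measure ℝ}
    (hμint : Integrable (fun u : ℝ => min 1 (u ^ 2)) μ)
    (hμexp : ∀ C : ℝ, Integrable (fun u : ℝ => Real.exp (C * u)) (μ.restrict {u : ℝ | 1 ≤ |u|})) :
    HasExpSqMoments μ := by
  intro C
  have hmeas : MeasurableSet {u : ℝ | 1 ≤ |u|} := measurableSet_le (by fun_prop) (by fun_prop)
  have hlarge : IntegrableOn (fun v : ℝ => v ^ 2 * Real.exp (C * |v|)) {u : ℝ | 1 ≤ |u|} μ := by
    refine (((hμexp (|C| + 1)).add (hμexp (-(|C| + 1)))).const_mul 2).mono' (by fun_prop)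
      (Eventually.of_forall fun v => ?_)
    rw [Real.norm_of_nonneg (by positivity)]
    exact sq_mul_exp_mul_abs_le C v
  have hsmall : IntegrableOn (fun v : ℝ => v ^ 2 * Real.exp (C * |v|)) {u : ℝ | 1 ≤ |u|}ᶜ μ := by
    refine (hμint.mul_const (Real.exp |C|)).integrableOn.mono' (by fun_prop)
      ((ae_restrict_iff' hmeas.compl).2 (Eventually.of_forall fun v hv => ?_))
    have hv1 : |v| ≤ 1 := (not_le.1 (show ¬1 ≤ |v| from hv)).le
    rw [Real.norm_of_nonneg (by positivity), min_eq_right ((sq_le_one_iff_abs_le_one v).2 hv1)]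
    gcongr
    calc C * |v| ≤ |C| * |v| := by gcongr; exact le_abs_self C
      _ ≤ |C| := mul_le_of_le_one_right (abs_nonneg C) hv1
  rw [← integrableOn_univ, ← union_compl_self {u : ℝ | 1 ≤ |u|}]
  exact hlarge.union hsmall

lemma HasExpSqMoments.measure_Icc_lt_top {μ : Measure ℝ} (hμ : HasExpSqMoments μ) {a : ℝ}
    (ha : 0 < a) (b : ℝ) : μ (Icc a b) < ⊤ := by
  refine (measure_mono fun u hu => ?_).trans_lt
    ((hμ 0).measure_ge_lt_top (ε := a ^ 2) (by positivity))
  simpa using pow_le_pow_left₀ ha.le hu.1 2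

lemma exists_measure_Icc_pos_of_measure_Ioi_pos {μ : Measure ℝ} (hμpos : 0 < μ (Ioi (0 : ℝ))) :
    ∃ a > 0, ∃ b, 0 < μ (Icc a b) := by
  by_contra! hzero
  refine hμpos.ne' (measure_mono_null (t := ⋃ n : ℕ, Icc (1 / ((n : ℝ) + 1)) n) (fun u hu => ?_)
    (measure_iUnion_null fun n => le_antisymm (hzero _ (by positivity) _) zero_le))
  obtain ⟨m, hm⟩ := exists_nat_one_div_lt (mem_Ioi.1 hu)
  obtain ⟨n, hn⟩ := exists_nat_ge u
  refine mem_iUnion.2 ⟨max m n, hm.le.trans' ?_, hn.trans (by simp)⟩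
  gcongr
  simp

/-- The image of `ds ⊗ μ(du)` under `(s, u) ↦ f(s) u`: the Lévy measure of `∫ f dZ` when `Z` has
Lévy measure `μ`. -/
noncomputable def kernelMeasure (μ : Measure ℝ) (f : ℝ → ℝ) : Measure ℝ :=
  ((volume : Measure ℝ).prod μ).map (fun p : ℝ × ℝ => f p.1 * p.2)

section KernelMeasure

variable {μ : Measure ℝ} {f : ℝ → ℝ}

lemma HasExpSqMoments.kernelMeasure (hμ : HasExpSqMoments μ) (hf : Measurable f) {A : ℝ}
    (hfA : ∀ s, |f s| ≤ A) (hf2 : Integrable (fun s => f s ^ 2)) :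
    HasExpSqMoments (kernelMeasure μ f) := by
  intro C
  rw [_root_.kernelMeasure, integrable_map_measure (by fun_prop) (by fun_prop)]
  refine (hf2.mul_prod (hμ (|C| * A))).mono' (by fun_prop) (Eventually.of_forall fun p => ?_)
  rw [Function.comp_apply, Real.norm_of_nonneg (by positivity), abs_mul, mul_pow, mul_assoc]
  gcongr ?_ * (?_ * Real.exp ?_)
  calc C * (|f p.1| * |p.2|) ≤ |C| * (A * |p.2|) := by
        gcongr
        · exact le_abs_self C
        · exact hfA p.1
    _ = |C| * A * |p.2| := (mul_assoc _ _ _).symm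

lemma integrable_kernelMeasure_iff (hf : Measurable f) {E : Type*} [NormedAddCommGroup E]
    {G : ℝ → E} (hG : AEStronglyMeasurable G (kernelMeasure μ f)) :
    Integrable G (kernelMeasure μ f)
      ↔ Integrable (fun p : ℝ × ℝ => G (f p.1 * p.2)) ((volume : Measure ℝ).prod μ) :=
  integrable_map_measure hG (by fun_prop)

variable [SFinite μ]

lemma kernelMeasure_Ioi_pos (hf : Measurable f) (hμpos : 0 < μ (Ioi 0)) {S : Set ℝ}
    (hS : 0 < volume S) (hfS : ∀ s ∈ S, 0 < f s) : 0 < kernelMeasure μ f (Ioi 0) := by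
  rw [kernelMeasure, Measure.map_apply (by fun_prop) measurableSet_Ioi]
  refine (ENNReal.mul_pos hS.ne' hμpos.ne').trans_le ?_
  rw [← Measure.prod_prod]
  exact measure_mono fun p hp => mul_pos (hfS p.1 hp.1) hp.2

section Integral

variable (hf : Measurable f)
include hf

lemma integral_kernelMeasure {E : Type*} [NormedAddCommGroup E] [NormedSpace ℝ E] {G : ℝ → E}
    (hG : Integrable G (kernelMeasure μ f)) :
    ∫ v, G v ∂(kernelMeasure μ f) = ∫ s, ∫ u, G (f s * u) ∂μ := by
  rw [kernelMeasure, integral_map (by fun_prop) hG.1,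
    integral_prod _ ((integrable_kernelMeasure_iff hf hG.1).1 hG)]

lemma mul_measureReal_le_integral_kernelMeasure {G : ℝ → ℝ} (hG : Integrable G (kernelMeasure μ f))
    (hG0 : ∀ v, 0 ≤ G v) {S T : Set ℝ} (hT : MeasurableSet T) (hTfin : μ T < ⊤) {c : ℝ}
    (hc : ∀ u ∈ T, c ≤ ∫ s in S, G (f s * u)) :
    c * μ.real T ≤ ∫ v, G v ∂(kernelMeasure μ f) := by
  have hprod := (integrable_kernelMeasure_iff hf hG.1).1 hG
  have hprod' : Integrable (fun p : ℝ × ℝ => G (f p.1 * p.2))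
      ((volume.restrict S).prod (μ.restrict T)) := by
    rw [Measure.prod_restrict]
    exact hprod.integrableOn
  calc c * μ.real T = ∫ _ in T, c ∂μ := by rw [setIntegral_const, smul_eq_mul, mul_comm]
    _ ≤ ∫ u in T, (∫ s in S, G (f s * u)) ∂μ :=
        setIntegral_mono_on (integrableOn_const hTfin.ne) hprod'.integral_prod_right hT hc
    _ = ∫ p in S ×ˢ T, G (f p.1 * p.2) ∂(volume.prod μ) := by
        rw [← Measure.prod_restrict, integral_prod_symm _ hprod']
    _ ≤ ∫ p, G (f p.1 * p.2) ∂(volume.prod μ) :=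
        setIntegral_le_integral hprod (Eventually.of_forall fun p => hG0 _)
    _ = ∫ v, G v ∂(kernelMeasure μ f) := (integral_map (by fun_prop) hG.1).symm

lemma kernelPsi_eq_charExponent (hν : HasExpSqMoments (kernelMeasure μ f)) (z : ℂ) :
    kernelPsi μ f z = charExponent (kernelMeasure μ f) z := by
  rw [charExponent, integral_kernelMeasure hf (hν.integrable_compensatedExp z)]
  simp only [kernelPsi, compensatedExp, mul_assoc]

lemma kernelM_eq_levyM (hν : HasExpSqMoments (kernelMeasure μ f)) (k : ℕ) (x : ℝ) :
    kernelM μ f k x = levyM (kernelMeasure μ f) k x := by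
  rw [levyM_eq_integral, integral_kernelMeasure hf (hν.integrable_levyIntegrand k x)]
  simp only [kernelM, levyIntegrand_mul, integral_const_mul, levyM_eq_integral]

lemma integrable_pow_mul_levyM (hν : HasExpSqMoments (kernelMeasure μ f)) (k : ℕ) (x : ℝ) :
    Integrable (fun s => f s ^ k * levyM μ k (f s * x)) := by
  have hint := hν.integrable_levyIntegrand k x
  simpa only [levyIntegrand_mul, integral_const_mul, ← levyM_eq_integral]
    using ((integrable_kernelMeasure_iff hf hint.1).1 hint).integral_prod_left

end Integral

end KernelMeasure

/-! ### Damping for the fractional kernel -/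

lemma exp_mul_setIntegral_one_sub_cos_le {H u x : ℝ} (hH : 1 / 2 < H) (hu : 0 ≤ u) (hx : 0 ≤ x)
    (w : ℝ) :
    Real.exp (x * (fracKernel H (1 / 2) * u))
        * ∫ s in Icc 0 (1 / 2), (1 - Real.cos (w * u * fracKernel H s))
      ≤ ∫ s in Icc 0 (1 / 2),
          Real.exp (x * (fracKernel H s * u)) * (1 - Real.cos (w * (fracKernel H s * u))) := by
  have hcont := continuous_fracKernel hH
  rw [← integral_const_mul]
  refine setIntegral_mono_on (Continuous.integrableOn_Icc (by fun_prop))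
    (Continuous.integrableOn_Icc (by fun_prop)) measurableSet_Icc fun s hs => ?_
  rw [show w * u * fracKernel H s = w * (fracKernel H s * u) by ring]
  have hcos := sub_nonneg.2 (Real.cos_le_one (w * (fracKernel H s * u)))
  gcongr
  exact fracKernel_half_le hH hs

lemma fracKernel_sq_le_of_le_neg_one {H s : ℝ} (hH : H ∈ Ioo (1 / 2 : ℝ) 1) (hs : s ≤ -1) :
    fracKernel H s ^ 2 ≤ (1 / Real.Gamma (H + 1 / 2)) ^ 2 / -s := by
  have hΓ := Gamma_add_half_pos hH.1
  have hs0 : 0 < -s := by linarith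
  have hle : fracKernel H s ≤ 1 / Real.Gamma (H + 1 / 2) * (-s) ^ (-(1 / 2) : ℝ) :=
    calc fracKernel H s
        ≤ (H - 1 / 2) * (-s) ^ (H - 1 / 2 - 1) / Real.Gamma (H + 1 / 2) :=
          fracKernel_le_of_neg hH (by linarith)
      _ ≤ 1 * (-s) ^ (-(1 / 2) : ℝ) / Real.Gamma (H + 1 / 2) := by
          gcongr ?_ * ?_ / _
          · linarith [hH.2]
          · exact Real.rpow_le_rpow_of_exponent_le (by linarith) (by linarith [hH.2])
      _ = _ := by ring
  refine (pow_le_pow_left₀ (fracKernel_nonneg hH.1 s) hle 2).trans_eq ?_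
  rw [mul_pow, ← Real.rpow_mul_natCast hs0.le]
  norm_num [Real.rpow_neg_one, div_eq_mul_inv]

/-- On `[-2ρ, -ρ]` with `ρ = R w²` the phase `w f(s) u` is at most one in absolute value, so that
`1 - cos` is comparable with its square. -/
lemma sq_mul_fracKernel_le_one_sub_cos {H a b R u s w : ℝ} (hH : H ∈ Ioo (1 / 2 : ℝ) 1)
    (ha : 0 < a) (hu : u ∈ Icc a b) (hR : 1 + (1 / Real.Gamma (H + 1 / 2) * b) ^ 2 ≤ R)
    (hw : 1 ≤ |w|) (hs : s ∈ Icc (-(2 * (R * w ^ 2))) (-(R * w ^ 2))) :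
    (w * ((H - 1 / 2) * (3 * (R * w ^ 2)) ^ (H - 1 / 2 - 1) / Real.Gamma (H + 1 / 2) * a)) ^ 2 / 8
      ≤ 1 - Real.cos (w * (fracKernel H s * u)) := by
  have hΓ := Gamma_add_half_pos hH.1
  have hα : 0 < H - 1 / 2 := by linarith [hH.1]
  have hw2 : 1 ≤ w ^ 2 := (one_le_sq_iff_one_le_abs w).2 hw
  have hR1 : 1 ≤ R := by nlinarith [sq_nonneg (1 / Real.Gamma (H + 1 / 2) * b)]
  have hs1 : s ≤ -1 := by nlinarith [hs.2]
  have hphase : (w * (fracKernel H s * u)) ^ 2 ≤ 1 :=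
    calc (w * (fracKernel H s * u)) ^ 2 = w ^ 2 * (fracKernel H s ^ 2 * u ^ 2) := by ring
      _ ≤ w ^ 2 * ((1 / Real.Gamma (H + 1 / 2)) ^ 2 / -s * b ^ 2) := by
          have hu0 := ha.le.trans hu.1
          gcongr
          · exact div_nonneg (sq_nonneg _) (by linarith)
          · exact fracKernel_sq_le_of_le_neg_one hH hs1
          · exact hu.2
      _ = w ^ 2 * (1 / Real.Gamma (H + 1 / 2) * b) ^ 2 / -s := by ring
      _ ≤ 1 := (div_le_one (by linarith)).2 (by nlinarith [hs.2])
  refine le_trans ?_ (sq_div_eight_le_one_sub_cos ((sq_le_one_iff_abs_le_one _).1 hphase))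
  rw [mul_pow, mul_pow w]
  gcongr ?_ * (?_ * ?_) ^ 2 / _
  · exact fracKernel_nonneg hH.1 s
  · refine le_trans ?_ (le_fracKernel_of_neg hH (by linarith))
    gcongr ?_ * ?_ / _
    exact Real.rpow_le_rpow_of_nonpos (by linarith) (by nlinarith [hs.1]) (by linarith [hH.2])
  · exact hu.1

lemma mul_sq_mul_rpow_sq_eq {R α g a w : ℝ} (hR : 0 ≤ R) (hw : w ≠ 0) :
    R * w ^ 2 * ((w * (α * (3 * (R * w ^ 2)) ^ (α - 1) / g * a)) ^ 2 / 8)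
      = R * (α * (3 * R) ^ (α - 1) / g * a) ^ 2 / 8 * |w| ^ (4 * α) := by
  have hw0 : 0 < |w| := abs_pos.2 hw
  have hsplit : (3 * (R * w ^ 2)) ^ (α - 1) = (3 * R) ^ (α - 1) * |w| ^ (2 * (α - 1)) := by
    rw [← mul_assoc, Real.mul_rpow (by positivity) (by positivity), Real.rpow_mul hw0.le,
      Real.rpow_two, sq_abs]
  have hpow : |w| ^ (4 * α) = w ^ 4 * (|w| ^ (2 * (α - 1))) ^ 2 := by
    rw [← Real.rpow_mul_natCast hw0.le, ← Even.pow_abs (by decide : Even 4), ← Real.rpow_natCast,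
      ← Real.rpow_add hw0]
    congr 1
    push_cast
    ring
  rw [hsplit, hpow]
  ring

section DampingFracKernel

variable {μ : Measure ℝ} [SFinite μ] {H : ℝ} (hH : H ∈ Ioo (1 / 2 : ℝ) 1)
  (hμ : HasExpSqMoments μ) (hμpos : 0 < μ (Ioi 0))
  (hν : HasExpSqMoments (kernelMeasure μ (fracKernel H)))
include hH hμ hμpos hν

lemma exists_exp_mul_min_le_damping_fracKernel :
    ∃ c > 0, ∃ r > 0, ∀ x ≥ 0, ∀ w,
      c * Real.exp (r * x) * min 1 (w ^ 2) ≤ damping (kernelMeasure μ (fracKernel H)) x w := by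
  obtain ⟨a, ha, b, hab⟩ := exists_measure_Icc_pos_of_measure_Ioi_pos hμpos
  obtain ⟨κ, hκ, d, hd, hosc⟩ := exists_le_integral_one_sub_cos_mul_fracKernel hH
  have hfin := hμ.measure_Icc_lt_top ha b
  have hmass : 0 < μ.real (Icc a b) := ENNReal.toReal_pos hab.ne' hfin.ne
  have hf := fracKernel_half_pos hH.1
  have : 0 < min 1 ((a * d) ^ 2) := lt_min one_pos (by positivity)
  refine ⟨κ * min 1 ((a * d) ^ 2) * μ.real (Icc a b), by positivity,
    fracKernel H (1 / 2) * a, by positivity, fun x hx w => ?_⟩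
  suffices hle : ∀ u ∈ Icc a b,
      Real.exp (fracKernel H (1 / 2) * a * x) * (κ * (min 1 ((a * d) ^ 2) * min 1 (w ^ 2)))
        ≤ ∫ s in Icc 0 (1 / 2),
          Real.exp (x * (fracKernel H s * u)) * (1 - Real.cos (w * (fracKernel H s * u))) by
    refine le_of_eq_of_le ?_ (mul_measureReal_le_integral_kernelMeasure
      (continuous_fracKernel hH.1).measurable (hν.integrable_damping x w)
      (fun v => mul_nonneg (Real.exp_pos _).le (sub_nonneg.2 (Real.cos_le_one _)))
      measurableSet_Icc hfin hle)
    ring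
  intro u hu
  have hu0 : 0 ≤ u := ha.le.trans hu.1
  refine le_trans ?_ (exp_mul_setIntegral_one_sub_cos_le hH.1 hu0 hx w)
  rw [mul_comm _ x]
  gcongr
  · exact hu.1
  · calc κ * (min 1 ((a * d) ^ 2) * min 1 (w ^ 2)) ≤ κ * min 1 ((a * d) ^ 2 * w ^ 2) := by
          gcongr
          exact min_one_mul_min_one_le (by positivity) (by positivity)
      _ ≤ κ * min 1 ((w * u * d) ^ 2) := by
          rw [← mul_pow, show a * d * w = w * a * d by ring, mul_pow, mul_pow w, mul_pow _ d,
            mul_pow w]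
          gcongr
          exact hu.1
      _ ≤ _ := hosc (w * u)

lemma exists_rpow_le_damping_fracKernel :
    ∃ c > 0, ∀ x ≥ 0, ∀ w : ℝ, 1 ≤ |w| →
      c * |w| ^ (4 * (H - 1 / 2)) ≤ damping (kernelMeasure μ (fracKernel H)) x w := by
  obtain ⟨a, ha, b, hab⟩ := exists_measure_Icc_pos_of_measure_Ioi_pos hμpos
  have hfin := hμ.measure_Icc_lt_top ha b
  have hmass : 0 < μ.real (Icc a b) := ENNReal.toReal_pos hab.ne' hfin.ne
  have hcont := continuous_fracKernel hH.1
  have hΓ := Gamma_add_half_pos hH.1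
  have hα : 0 < H - 1 / 2 := by linarith [hH.1]
  set R := 1 + (1 / Real.Gamma (H + 1 / 2) * b) ^ 2 with hR
  refine ⟨R * ((H - 1 / 2) * (3 * R) ^ (H - 1 / 2 - 1) / Real.Gamma (H + 1 / 2) * a) ^ 2 / 8
    * μ.real (Icc a b), by positivity, fun x hx w hw => ?_⟩
  have hw0 : w ≠ 0 := by
    rintro rfl
    norm_num at hw
  rw [mul_right_comm, ← mul_sq_mul_rpow_sq_eq (by positivity) hw0]
  refine mul_measureReal_le_integral_kernelMeasure hcont.measurable (hν.integrable_damping x w)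
    (fun v => mul_nonneg (Real.exp_pos _).le (sub_nonneg.2 (Real.cos_le_one _)))
    (S := Icc (-(2 * (R * w ^ 2))) (-(R * w ^ 2))) measurableSet_Icc hfin fun u hu => ?_
  have hvol : volume.real (Icc (-(2 * (R * w ^ 2))) (-(R * w ^ 2))) = R * w ^ 2 := by
    have : 0 ≤ R * w ^ 2 := by positivity
    rw [Real.volume_real_Icc_of_le (by linarith)]
    ring
  nth_rw 1 [← hvol]
  rw [← smul_eq_mul, ← setIntegral_const]
  refine setIntegral_mono_on (Continuous.integrableOn_Icc (by fun_prop))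
    (Continuous.integrableOn_Icc (by fun_prop)) measurableSet_Icc fun s hs => ?_
  refine (sq_mul_fracKernel_le_one_sub_cos hH ha hu hR.ge hw hs).trans
    (le_mul_of_one_le_left (sub_nonneg.2 (Real.cos_le_one _)) (Real.one_le_exp ?_))
  exact mul_nonneg hx (mul_nonneg (fracKernel_nonneg hH.1 s) (ha.le.trans hu.1))

end DampingFracKernel

/-! ### Growth of the moment functions -/

lemma exp_mul_le_exp_mul_add_one {x y : ℝ} (hx : 0 ≤ x) (hxy : x ≤ y) (v : ℝ) :
    Real.exp (x * v) ≤ Real.exp (y * v) + 1 := by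
  rcases le_total 0 v with hv | hv
  · have : Real.exp (x * v) ≤ Real.exp (y * v) := by gcongr
    linarith
  · have := Real.exp_le_one_iff.2 (mul_nonpos_of_nonneg_of_nonpos hx hv)
    linarith [Real.exp_pos (y * v)]

section Growth

variable {μ : Measure ℝ} (hμ : HasExpSqMoments μ)
include hμ

lemma HasExpSqMoments.levyM_le_levyM_add {k : ℕ} (hk : Even k) (hk2 : 2 ≤ k) {x y : ℝ}
    (hx : 0 ≤ x) (hxy : x ≤ y) : levyM μ k x ≤ levyM μ k y + levyM μ k 0 := by
  have hint := hμ.integrable_levyIntegrand k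
  obtain ⟨n, rfl⟩ := Nat.exists_eq_add_of_le' hk2
  simp only [levyM_eq_integral]
  rw [← integral_add (hint y) (hint 0)]
  refine integral_mono (hint x) ((hint y).add (hint 0)) fun v => ?_
  simp only [levyIntegrand, zero_mul, Real.exp_zero, ← mul_add]
  exact mul_le_mul_of_nonneg_left (exp_mul_le_exp_mul_add_one hx hxy v) (hk.pow_nonneg v)

lemma HasExpSqMoments.tendsto_levyM_atTop (hμpos : 0 < μ (Ioi 0)) {k : ℕ} (hk : Even k)
    (hk2 : 2 ≤ k) : Tendsto (levyM μ k) atTop atTop := by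
  obtain ⟨a, ha, b, hab⟩ := exists_measure_Icc_pos_of_measure_Ioi_pos hμpos
  have hfin := hμ.measure_Icc_lt_top ha b
  have hmass : 0 < μ.real (Icc a b) := ENNReal.toReal_pos hab.ne' hfin.ne
  have hexp : Tendsto (fun x : ℝ => μ.real (Icc a b) * a ^ k * Real.exp (a * x)) atTop atTop :=
    (Real.tendsto_exp_atTop.comp (tendsto_id.const_mul_atTop ha)).const_mul_atTop (by positivity)
  refine tendsto_atTop_mono' _ ?_ hexp
  filter_upwards [eventually_ge_atTop 0] with x hx
  have hint := hμ.integrable_levyIntegrand k x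
  calc μ.real (Icc a b) * a ^ k * Real.exp (a * x)
      = ∫ _ in Icc a b, a ^ k * Real.exp (a * x) ∂μ := by
        rw [setIntegral_const, smul_eq_mul, mul_assoc]
    _ ≤ ∫ u in Icc a b, levyIntegrand k x u ∂μ := by
        refine setIntegral_mono_on (integrableOn_const hfin.ne) hint.integrableOn
          measurableSet_Icc fun u hu => ?_
        obtain ⟨n, rfl⟩ := Nat.exists_eq_add_of_le' hk2
        have hau := hu.1
        rw [levyIntegrand, mul_comm a x]
        gcongr
        exact hk.pow_nonneg u
    _ ≤ levyM μ k x := by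
        rw [levyM_eq_integral]
        exact setIntegral_le_integral hint (Eventually.of_forall (levyIntegrand_nonneg hk x))

/-- An eventual bound extends to `[0, ∞)` at the cost of a constant, because the moment functions
are bounded on bounded subsets of `[0, ∞)`. -/
lemma HasExpSqMoments.exists_levyM_le_mul_of_eventually_le {k : ℕ} (hk : Even k) (hk2 : 2 ≤ k)
    {g : ℝ → ℝ} {m : ℝ} (hm : 0 < m) (hg : ∀ x ≥ 0, m ≤ g x)
    (hle : ∀ᶠ x in atTop, levyM μ k x ≤ g x) : ∃ C ≥ 1, ∀ x ≥ 0, levyM μ k x ≤ C * g x := by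
  obtain ⟨X, hX⟩ := eventually_atTop.1 hle
  have : 0 ≤ levyM μ k (max X 0) + levyM μ k 0 :=
    add_nonneg (levyM_nonneg μ hk _) (levyM_nonneg μ hk _)
  refine ⟨max 1 ((levyM μ k (max X 0) + levyM μ k 0) / m), le_max_left _ _, fun x hx => ?_⟩
  have hgx : 0 ≤ g x := hm.le.trans (hg x hx)
  rcases le_total X x with hXx | hxX
  · exact (hX x hXx).trans (le_mul_of_one_le_left hgx (le_max_left _ _))
  · calc levyM μ k x ≤ levyM μ k (max X 0) + levyM μ k 0 :=
          hμ.levyM_le_levyM_add hk hk2 hx (hxX.trans (le_max_left _ _))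
      _ = (levyM μ k (max X 0) + levyM μ k 0) / m * m := by field_simp
      _ ≤ max 1 ((levyM μ k (max X 0) + levyM μ k 0) / m) * g x := by
          gcongr
          · exact le_max_right _ _
          · exact hg x hx

end Growth

lemma eventually_le_exp_of_tendsto_log_add_log_log {g h : ℝ → ℝ} (hh : Tendsto h atTop atTop)
    (hlog : Tendsto (fun ξ => (Real.log (max (g ξ / h ξ) 1) + Real.log (Real.log (h ξ))) / ξ)
      atTop (nhds 0)) {ε : ℝ} (hε : 0 < ε) :
    ∀ᶠ ξ in atTop, g ξ ≤ Real.exp (ε * ξ) * h ξ ∧ h ξ ≤ Real.exp (Real.exp (ε * ξ)) := by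
  filter_upwards [hlog.eventually_lt_const hε, eventually_gt_atTop 0,
    hh.eventually_ge_atTop (Real.exp 1)] with ξ hlt hξ hexp
  rw [div_lt_iff₀ hξ] at hlt
  have hpos : 0 < h ξ := (Real.exp_pos 1).trans_le hexp
  have hlog1 : 1 ≤ Real.log (h ξ) := (Real.le_log_iff_exp_le hpos).2 hexp
  have hloglog := Real.log_nonneg hlog1
  have hlogmax : 0 ≤ Real.log (max (g ξ / h ξ) 1) := Real.log_nonneg (le_max_right _ _)
  constructor
  · rw [← div_le_iff₀ hpos]
    exact (le_max_left _ 1).trans ((Real.log_le_iff_le_exp (by positivity)).1 (by linarith))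
  · rw [← Real.log_le_iff_le_exp hpos, ← Real.log_le_iff_le_exp (by linarith)]
    linarith

section Transfer

variable {μ : Measure ℝ} [SFinite μ] {f : ℝ → ℝ} {A : ℝ} (hf : Measurable f)
  (hμ : HasExpSqMoments μ) (hν : HasExpSqMoments (kernelMeasure μ f))
include hf hμ hν

lemma levyM_four_kernelMeasure_le (hf0 : ∀ s, 0 ≤ f s) (hfA : ∀ s, f s ≤ A)
    (hf4 : Integrable (fun s => f s ^ 4)) {x : ℝ} (hx : 0 ≤ x) :
    levyM (kernelMeasure μ f) 4 x ≤ (∫ s, f s ^ 4) * (levyM μ 4 (A * x) + levyM μ 4 0) := by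
  rw [← kernelM_eq_levyM hf hν, kernelM, ← integral_mul_const]
  refine integral_mono (integrable_pow_mul_levyM hf hν 4 x) (hf4.mul_const _) fun s => ?_
  refine mul_le_mul_of_nonneg_left ?_ (pow_nonneg (hf0 s) 4)
  exact hμ.levyM_le_levyM_add (by decide) (by norm_num) (mul_nonneg (hf0 s) hx)
    (mul_le_mul_of_nonneg_right (hfA s) hx)

lemma le_levyM_two_kernelMeasure {S : Set ℝ} (hS : MeasurableSet S) (hSfin : volume S < ⊤) {B : ℝ}
    (hB : 0 ≤ B) (hfS : ∀ s ∈ S, B ≤ f s) {x : ℝ} (hx : 0 ≤ x) :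
    volume.real S * (B ^ 2 * (levyM μ 2 (B * x) - levyM μ 2 0))
      ≤ levyM (kernelMeasure μ f) 2 x := by
  have hint := integrable_pow_mul_levyM hf hν 2 x
  rw [← kernelM_eq_levyM hf hν, kernelM, ← smul_eq_mul, ← setIntegral_const]
  refine (setIntegral_mono_on (integrableOn_const hSfin.ne) hint.integrableOn hS
    fun s hs => ?_).trans (setIntegral_le_integral hint (Eventually.of_forall fun s =>
      mul_nonneg (sq_nonneg _) (levyM_nonneg μ even_two _)))
  have hmono := hμ.levyM_le_levyM_add even_two le_rfl (mul_nonneg hB hx)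
    (mul_le_mul_of_nonneg_right (hfS s hs) hx)
  calc B ^ 2 * (levyM μ 2 (B * x) - levyM μ 2 0) ≤ B ^ 2 * levyM μ 2 (f s * x) := by
        gcongr
        linarith
    _ ≤ f s ^ 2 * levyM μ 2 (f s * x) := by
        gcongr
        · exact levyM_nonneg μ even_two _
        · exact hfS s hs

lemma tendsto_levyM_four_div_sq_kernelMeasure (hμpos : 0 < μ (Ioi 0)) (hf0 : ∀ s, 0 ≤ f s)
    (hfA : ∀ s, f s ≤ A) (hA : 0 < A) (hf4 : Integrable (fun s => f s ^ 4)) {γ : ℝ} (hγ : 0 < γ)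
    {S : Set ℝ} (hS : MeasurableSet S) (hSpos : 0 < volume S) (hSfin : volume S < ⊤)
    (hfS : ∀ s ∈ S, γ * A ≤ f s)
    (hT1 : Tendsto (fun ξ => levyM μ 4 ξ / (levyM μ 2 (γ * ξ)) ^ 2) atTop (nhds 0)) :
    Tendsto (fun x => levyM (kernelMeasure μ f) 4 x / levyM (kernelMeasure μ f) 2 x ^ 2)
      atTop (nhds 0) := by
  have hA_top : Tendsto (fun x : ℝ => A * x) atTop atTop := tendsto_id.const_mul_atTop hA
  have hM4 := (hμ.tendsto_levyM_atTop hμpos (by decide : Even 4) (by norm_num)).comp hA_top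
  have hM2 := (hμ.tendsto_levyM_atTop hμpos even_two le_rfl).comp (hA_top.const_mul_atTop hγ)
  set c := volume.real S * (γ * A) ^ 2
  have hc : 0 < c := mul_pos (ENNReal.toReal_pos hSpos.ne' hSfin.ne) (by positivity)
  have : 0 ≤ ∫ s, f s ^ 4 := integral_nonneg fun s => pow_nonneg (hf0 s) 4
  have hlim := (hT1.comp hA_top).const_mul (8 * (∫ s, f s ^ 4) / c ^ 2)
  rw [mul_zero] at hlim
  refine squeeze_zero' (Eventually.of_forall fun x =>
    div_nonneg (levyM_nonneg _ (by decide) _) (sq_nonneg _)) ?_ hlim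
  filter_upwards [eventually_ge_atTop 0, hM4.eventually_ge_atTop (levyM μ 4 0),
    hM2.eventually_ge_atTop (2 * levyM μ 2 0), hM2.eventually_gt_atTop 0] with x hx h4 h2 h2pos
  simp only [Function.comp_apply] at h4 h2 h2pos ⊢
  have hlower : c * (levyM μ 2 (γ * (A * x)) / 2) ≤ levyM (kernelMeasure μ f) 2 x :=
    calc c * (levyM μ 2 (γ * (A * x)) / 2)
        ≤ c * (levyM μ 2 (γ * A * x) - levyM μ 2 0) := by
          rw [mul_assoc γ]
          gcongr
          linarith
      _ ≤ levyM (kernelMeasure μ f) 2 x := by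
          rw [mul_assoc]
          exact le_levyM_two_kernelMeasure hf hμ hν hS hSfin (by positivity) hfS hx
  calc levyM (kernelMeasure μ f) 4 x / levyM (kernelMeasure μ f) 2 x ^ 2
      ≤ (∫ s, f s ^ 4) * (levyM μ 4 (A * x) + levyM μ 4 (A * x))
          / (c * (levyM μ 2 (γ * (A * x)) / 2)) ^ 2 := by
        have h40 := levyM_nonneg μ (by decide : Even 4) (A * x)
        gcongr
        refine (levyM_four_kernelMeasure_le hf hμ hν hf0 hfA hf4 hx).trans ?_
        gcongr
    _ = _ := by
        field_simp
        ring

end Transfer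

section GrowthTransfer

variable {μ : Measure ℝ} [SFinite μ] {f : ℝ → ℝ} {A : ℝ} (hf : Measurable f)
  (hν : HasExpSqMoments (kernelMeasure μ f)) (hf0 : ∀ s, 0 ≤ f s) (hfA : ∀ s, f s ≤ A)
include hf hν hf0 hfA

lemma levyM_four_kernelMeasure_le_of_le {ε C : ℝ} (hε : 0 ≤ ε) (hC : 0 ≤ C)
    (hle : ∀ x ≥ 0, levyM μ 4 x ≤ C * Real.exp (ε * x) * levyM μ 2 x) {x : ℝ} (hx : 0 ≤ x) :
    levyM (kernelMeasure μ f) 4 x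
      ≤ A ^ 2 * C * Real.exp (ε * A * x) * levyM (kernelMeasure μ f) 2 x := by
  simp only [← kernelM_eq_levyM hf hν, kernelM]
  rw [← integral_const_mul]
  refine integral_mono (integrable_pow_mul_levyM hf hν 4 x)
    ((integrable_pow_mul_levyM hf hν 2 x).const_mul _) fun s => ?_
  have hs0 := hf0 s
  have h2 := levyM_nonneg μ even_two (f s * x)
  calc f s ^ 4 * levyM μ 4 (f s * x)
      ≤ f s ^ 4 * (C * Real.exp (ε * (f s * x)) * levyM μ 2 (f s * x)) := by
        gcongr
        exact hle _ (by positivity)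
    _ = f s ^ 2 * C * Real.exp (ε * f s * x) * (f s ^ 2 * levyM μ 2 (f s * x)) := by ring_nf
    _ ≤ A ^ 2 * C * Real.exp (ε * A * x) * (f s ^ 2 * levyM μ 2 (f s * x)) := by
        gcongr <;> exact hfA s

lemma levyM_two_kernelMeasure_le_of_le (hf2 : Integrable (fun s => f s ^ 2)) {ε C : ℝ}
    (hε : 0 ≤ ε) (hC : 0 ≤ C) (hle : ∀ x ≥ 0, levyM μ 2 x ≤ C * Real.exp (Real.exp (ε * x)))
    {x : ℝ} (hx : 0 ≤ x) :
    levyM (kernelMeasure μ f) 2 x ≤ (∫ s, f s ^ 2) * (C * Real.exp (Real.exp (ε * A * x))) := by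
  rw [← kernelM_eq_levyM hf hν, kernelM, ← integral_mul_const]
  refine integral_mono (integrable_pow_mul_levyM hf hν 2 x) (hf2.mul_const _) fun s => ?_
  refine mul_le_mul_of_nonneg_left ?_ (sq_nonneg _)
  refine (hle _ (mul_nonneg (hf0 s) hx)).trans ?_
  rw [← mul_assoc]
  gcongr
  exact hfA s

variable (hA : 0 < A) (hμ : HasExpSqMoments μ) (hμpos : 0 < μ (Ioi 0))
  (hT2 : Tendsto
    (fun ξ => (Real.log (max (levyM μ 4 ξ / levyM μ 2 ξ) 1)
      + Real.log (Real.log (levyM μ 2 ξ))) / ξ) atTop (nhds 0)) {ε : ℝ} (hε : 0 < ε)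
include hA hμ hμpos hT2 hε

lemma exists_levyM_four_kernelMeasure_le :
    ∃ C > 0, ∀ x ≥ 0, levyM (kernelMeasure μ f) 4 x
      ≤ C * Real.exp (ε * x) * levyM (kernelMeasure μ f) 2 x := by
  have hεA : 0 < ε / A := by positivity
  obtain ⟨m, hm, hmle⟩ := hμ.exists_pos_le_levyM_two hμpos
  obtain ⟨C, hC, hle⟩ := hμ.exists_levyM_le_mul_of_eventually_le (by decide : Even 4) (by norm_num)
    hm (fun x hx => (hmle x hx).trans (le_mul_of_one_le_left (levyM_nonneg μ even_two x)
      (Real.one_le_exp (mul_nonneg hεA.le hx))))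
    ((eventually_le_exp_of_tendsto_log_add_log_log
      (hμ.tendsto_levyM_atTop hμpos even_two le_rfl) hT2 hεA).mono fun _ h => h.1)
  refine ⟨A ^ 2 * C, by positivity, fun x hx => ?_⟩
  have := levyM_four_kernelMeasure_le_of_le hf hν hf0 hfA hεA.le (by positivity)
    (fun y hy => (hle y hy).trans_eq (mul_assoc _ _ _).symm) hx
  rwa [div_mul_cancel₀ ε hA.ne'] at this

lemma exists_levyM_two_kernelMeasure_le (hf2 : Integrable (fun s => f s ^ 2)) :
    ∃ C > 0, ∀ x ≥ 0, levyM (kernelMeasure μ f) 2 x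
      ≤ C * Real.exp (C * Real.exp (ε * x)) := by
  have hεA : 0 < ε / A := by positivity
  obtain ⟨C, hC, hle⟩ := hμ.exists_levyM_le_mul_of_eventually_le even_two le_rfl one_pos
    (fun x _ => Real.one_le_exp (Real.exp_pos (ε / A * x)).le)
    ((eventually_le_exp_of_tendsto_log_add_log_log
      (hμ.tendsto_levyM_atTop hμpos even_two le_rfl) hT2 hεA).mono fun _ h => h.2)
  have : 0 ≤ ∫ s, f s ^ 2 := integral_nonneg fun s => sq_nonneg (f s)
  refine ⟨(∫ s, f s ^ 2) * C + 1, by positivity, fun x hx => ?_⟩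
  have hM2 := levyM_two_kernelMeasure_le_of_le hf hν hf0 hfA hf2 hεA.le (by positivity) hle hx
  rw [div_mul_cancel₀ ε hA.ne', ← mul_assoc] at hM2
  refine hM2.trans ?_
  gcongr
  · linarith
  · exact le_mul_of_one_le_left (Real.exp_pos _).le (le_add_of_nonneg_left (by positivity))

end GrowthTransfer

/-! ### The density of the fractional Lévy motion -/

lemma integrable_fracKernel_pow_four {H : ℝ} (hH : H ∈ Ioo (1 / 2 : ℝ) 1) :
    Integrable (fun s => fracKernel H s ^ 4) := by
  have hcont := continuous_fracKernel hH.1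
  refine ((integrable_fracKernel_sq hH).const_mul ((1 / Real.Gamma (H + 1 / 2)) ^ 2)).mono'
    (by fun_prop) (Eventually.of_forall fun s => ?_)
  have hs0 := fracKernel_nonneg hH.1 s
  rw [Real.norm_of_nonneg (by positivity), show fracKernel H s ^ 4
    = fracKernel H s ^ 2 * fracKernel H s ^ 2 by ring]
  gcongr
  exact fracKernel_le hH s

lemma exists_forall_mem_Icc_mul_le_fracKernel {H γ : ℝ} (hH : 1 / 2 < H) (hγ : γ < 1) :
    ∃ σ > 0, ∀ s ∈ Icc 0 σ, γ * (1 / Real.Gamma (H + 1 / 2)) ≤ fracKernel H s := by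
  have hzero : γ * (1 / Real.Gamma (H + 1 / 2)) < fracKernel H 0 := by
    rw [fracKernel_of_mem_Icc hH ⟨le_rfl, zero_le_one⟩, sub_zero, Real.one_rpow]
    exact mul_lt_of_lt_one_left (one_div_pos.2 (Gamma_add_half_pos hH)) hγ
  obtain ⟨δ, hδ, hball⟩ := Metric.eventually_nhds_iff.1
    ((continuous_fracKernel hH).continuousAt.eventually_const_lt hzero)
  refine ⟨δ / 2, half_pos hδ, fun s hs => (hball ?_).le⟩
  rw [Real.dist_eq, sub_zero, abs_of_nonneg hs.1]
  linarith [hs.2]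

lemma saddlePointRegular_kernelMeasure_fracKernel {μ : Measure ℝ} [SFinite μ] {H γ : ℝ}
    (hH : H ∈ Ioo (1 / 2 : ℝ) 1) (hμ : HasExpSqMoments μ) (hμpos : 0 < μ (Ioi 0))
    (hγ : γ ∈ Ioo (0 : ℝ) 1)
    (hT1 : Tendsto (fun ξ => levyM μ 4 ξ / (levyM μ 2 (γ * ξ)) ^ 2) atTop (nhds 0))
    (hT2 : Tendsto
      (fun ξ => (Real.log (max (levyM μ 4 ξ / levyM μ 2 ξ) 1)
        + Real.log (Real.log (levyM μ 2 ξ))) / ξ) atTop (nhds 0)) :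
    SaddlePointRegular (kernelMeasure μ (fracKernel H)) := by
  have hA : 0 < 1 / Real.Gamma (H + 1 / 2) := one_div_pos.2 (Gamma_add_half_pos hH.1)
  have hf := (continuous_fracKernel hH.1).measurable
  have hf0 := fracKernel_nonneg hH.1
  have hfA := fracKernel_le hH
  have hf2 := integrable_fracKernel_sq hH
  have hν : HasExpSqMoments (kernelMeasure μ (fracKernel H)) :=
    hμ.kernelMeasure hf (fun s => (abs_of_nonneg (hf0 s)).trans_le (hfA s)) hf2
  obtain ⟨c, hc, hrpow⟩ := exists_rpow_le_damping_fracKernel hH hμ hμpos hν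
  obtain ⟨σ, hσ, hfσ⟩ := exists_forall_mem_Icc_mul_le_fracKernel hH.1 hγ.2
  have hvol : 0 < volume (Icc 0 σ) := by simpa using hσ
  exact
    { hasExpSqMoments := hν
      measure_Ioi_pos := kernelMeasure_Ioi_pos hf hμpos hvol
        fun s hs => (mul_pos hγ.1 hA).trans_le (hfσ s hs)
      exp_mul_min_le_damping := exists_exp_mul_min_le_damping_fracKernel hH hμ hμpos hν
      rpow_le_damping := ⟨c, hc, 4 * (H - 1 / 2), by linarith [hH.1], hrpow⟩
      tendsto_levyM_four_div_sq := tendsto_levyM_four_div_sq_kernelMeasure hf hμ hν hμpos hf0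
        hfA hA (integrable_fracKernel_pow_four hH) hγ.1 measurableSet_Icc hvol
        measure_Icc_lt_top hfσ hT1
      levyM_four_le := fun _ hε =>
        exists_levyM_four_kernelMeasure_le hf hν hf0 hfA hA hμ hμpos hT2 hε
      levyM_two_le := fun _ hε =>
        exists_levyM_two_kernelMeasure_le hf hν hf0 hfA hA hμ hμpos hT2 hε hf2 }

/-- Self-similarity, from the substitution `s ↦ s / t`. -/
lemma kernelPsi_fracKernelT (μ : Measure ℝ) (H : ℝ) {t : ℝ} (ht : 0 < t) (z : ℂ) :
    kernelPsi μ (fracKernelT H t) z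
      = t * kernelPsi μ (fracKernel H) ((t ^ (H - 1 / 2) : ℝ) * z) := by
  have hscale := Measure.integral_comp_div (fun s => ∫ u,
    (Complex.exp (-(Complex.I * ((t ^ (H - 1 / 2) : ℝ) * z) * (fracKernel H s * u : ℝ))) - 1
      + Complex.I * ((t ^ (H - 1 / 2) : ℝ) * z) * (fracKernel H s * u : ℝ)) ∂μ) t
  rw [abs_of_pos ht, Complex.real_smul] at hscale
  rw [kernelPsi, kernelPsi, ← hscale]
  congr! 4 with s u
  rw [fracKernelT_eq_rpow_mul H ht]
  push_cast
  ring_nf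

section Density

variable {μ : Measure ℝ} [SFinite μ] {H : ℝ} (hH : 1 / 2 < H)
  (h : SaddlePointRegular (kernelMeasure μ (fracKernel H)))
include hH h

lemma integrable_cexp_kernelPsi_fracKernelT {t : ℝ} (ht : 0 < t) (x : ℝ) :
    Integrable fun z : ℝ =>
      Complex.exp (Complex.I * x * z + kernelPsi μ (fracKernelT H t) z) := by
  have hpow : t ^ (H - 1 / 2) ≠ 0 := (Real.rpow_pos_of_pos ht _).ne'
  refine (((h.integrable_cexp_mul_tiltedExponent ht le_rfl).comp_mul_left' hpow).bdd_mul (c := 1)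
    (f := fun z : ℝ => Complex.exp (Complex.I * x * z)) (by fun_prop)
    (Eventually.of_forall fun z => ?_)).congr (Eventually.of_forall fun z => ?_)
  · simp [Complex.norm_exp]
  · beta_reduce
    rw [kernelPsi_fracKernelT μ H ht, ← Complex.ofReal_mul,
      kernelPsi_eq_charExponent (continuous_fracKernel hH).measurable h.hasExpSqMoments,
      h.hasExpSqMoments.charExponent_ofReal, Complex.exp_add]

/-- The substitution `w = t^{H-1/2} z`, followed by the shift of the contour to the saddle point. -/
lemma integral_cexp_kernelPsi_fracKernelT {t x y ξ : ℝ} (ht : 0 < t) (hξ : 0 ≤ ξ)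
    (hy : levyM (kernelMeasure μ (fracKernel H)) 1 ξ = y) (hx : x = t ^ (H + 1 / 2) * y) :
    ∫ z : ℝ, Complex.exp (Complex.I * x * z + kernelPsi μ (fracKernelT H t) z)
      = ((t ^ (H - 1 / 2))⁻¹ * Real.exp (t * (-(y * ξ)
          + levyM (kernelMeasure μ (fracKernel H)) 0 ξ)) : ℝ)
        * ∫ w : ℝ, Complex.exp (t * tiltedExponent (kernelMeasure μ (fracKernel H)) ξ w) := by
  have hpow : 0 < t ^ (H - 1 / 2) := Real.rpow_pos_of_pos ht _
  have hsub := Measure.integral_comp_mul_left (fun w : ℝ => Complex.exp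
    (t * (Complex.I * y * w + charExponent (kernelMeasure μ (fracKernel H)) w))) (t ^ (H - 1 / 2))
  rw [← hy, h.integral_cexp_charExponent ht hξ, hy, abs_of_pos (inv_pos.2 hpow),
    Complex.real_smul, ← mul_assoc, ← Complex.ofReal_mul] at hsub
  rw [← hsub]
  congr! 3 with z
  rw [kernelPsi_fracKernelT μ H ht,
    kernelPsi_eq_charExponent (continuous_fracKernel hH).measurable h.hasExpSqMoments, hx,
    show H + 1 / 2 = 1 + (H - 1 / 2) by ring, Real.rpow_one_add' ht.le (by linarith)]
  push_cast
  ring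

end Density

/-- The limit `t + x → ∞` along `(t, x) ∈ [t₀, ∞) × [0, ∞)`. -/
def sumAtTop (t₀ : ℝ) : Filter (ℝ × ℝ) :=
  comap (fun q : ℝ × ℝ => q.1 + q.2) atTop ⊓ 𝓟 {q | t₀ ≤ q.1 ∧ 0 ≤ q.2}

instance sumAtTop.isCountablyGenerated (t₀ : ℝ) : (sumAtTop t₀).IsCountablyGenerated :=
  inferInstanceAs (IsCountablyGenerated (_ ⊓ _))

lemma eventually_sumAtTop_iff {t₀ : ℝ} {P : ℝ × ℝ → Prop} :
    (∀ᶠ q in sumAtTop t₀, P q) ↔ ∃ N, ∀ t x : ℝ, t₀ ≤ t → 0 ≤ x → N ≤ t + x → P (t, x) := by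
  rw [sumAtTop, eventually_inf_principal, eventually_comap, eventually_atTop]
  constructor
  · rintro ⟨N, hN⟩
    exact ⟨N, fun t x ht hx hle => hN (t + x) hle (t, x) rfl ⟨ht, hx⟩⟩
  · rintro ⟨N, hN⟩
    exact ⟨N, fun r hr q hq hmem => hN q.1 q.2 hmem.1 hmem.2 (hr.trans_eq hq.symm)⟩

lemma tendsto_add_comp_div_rpow_atTop_of_monotone {M ζ : ℝ → ℝ} (hM : Monotone M)
    (hζ : ∀ y : ℝ, 0 ≤ y → 0 ≤ ζ y ∧ M (ζ y) = y) {r t₀ : ℝ} (hr : 0 ≤ r) (ht₀ : 0 < t₀) :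
    Tendsto (fun q : ℝ × ℝ => q.1 + ζ (q.2 / q.1 ^ r)) (sumAtTop t₀) atTop := by
  refine tendsto_atTop.2 fun B => eventually_sumAtTop_iff.2
    ⟨B + M B * B ^ r, fun t x ht hx hle => ?_⟩
  have ht0 : 0 < t := ht₀.trans_le ht
  have hy : 0 ≤ x / t ^ r := by positivity
  obtain ⟨hζ0, hMζ⟩ := hζ _ hy
  by_contra! hlt
  have hMB : x / t ^ r ≤ M B := hMζ.symm.trans_le (hM (by linarith))
  have hpow : t ^ r ≤ B ^ r := Real.rpow_le_rpow ht0.le (by linarith) hr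
  have hxle : x ≤ M B * B ^ r := by
    rw [← div_mul_cancel₀ x (Real.rpow_pos_of_pos ht0 r).ne']
    exact mul_le_mul hMB hpow (by positivity) (hy.trans hMB)
  linarith

lemma inv_two_pi_mul_sqrt_mul_exp_neg_eq {q t E m J : ℝ} (hq : 0 < q) :
    1 / (2 * Real.pi) * (q⁻¹ * Real.exp E * J) * √(2 * Real.pi * (q ^ 2 * t) * m) * Real.exp (-E)
      = √(t * m) * J / √(2 * Real.pi) := by
  have hsqrt : √(2 * Real.pi * (q ^ 2 * t) * m) = √(2 * Real.pi) * q * √(t * m) := by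
    rw [show 2 * Real.pi * (q ^ 2 * t) * m = 2 * Real.pi * q ^ 2 * (t * m) by ring,
      Real.sqrt_mul (by positivity), Real.sqrt_mul (by positivity), Real.sqrt_sq hq.le]
  have hsq : 2 * Real.pi = √(2 * Real.pi) ^ 2 := (Real.sq_sqrt (by positivity)).symm
  rw [hsqrt, Real.exp_neg]
  nth_rw 1 [hsq]
  field_simp

lemma tendsto_normalized_fourier_kernelPsi_fracKernelT {μ : Measure ℝ} [SFinite μ] {H t₀ : ℝ}
    (hH : 1 / 2 < H) (h : SaddlePointRegular (kernelMeasure μ (fracKernel H))) {ζ : ℝ → ℝ}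
    (hζ : ∀ y : ℝ, 0 ≤ y → 0 ≤ ζ y ∧ levyM (kernelMeasure μ (fracKernel H)) 1 (ζ y) = y)
    (ht₀ : 0 < t₀) :
    Tendsto (fun q : ℝ × ℝ => 1 / (2 * Real.pi)
        * (∫ z : ℝ, Complex.exp (Complex.I * q.2 * z + kernelPsi μ (fracKernelT H q.1) z)).re
        * √(2 * Real.pi * q.1 ^ (2 * H)
          * levyM (kernelMeasure μ (fracKernel H)) 2 (ζ (q.2 / q.1 ^ (H + 1 / 2))))
        * Real.exp (-(q.1 * (-(q.2 / q.1 ^ (H + 1 / 2) * ζ (q.2 / q.1 ^ (H + 1 / 2)))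
          + levyM (kernelMeasure μ (fracKernel H)) 0 (ζ (q.2 / q.1 ^ (H + 1 / 2)))))))
      (sumAtTop t₀) (nhds 1) := by
  have hmem : ∀ᶠ q : ℝ × ℝ in sumAtTop t₀, t₀ ≤ q.1 ∧ 0 ≤ q.2 / q.1 ^ (H + 1 / 2) :=
    eventually_sumAtTop_iff.2 ⟨0, fun t x ht hx _ =>
      ⟨ht, div_nonneg hx (Real.rpow_nonneg (ht₀.le.trans ht) _)⟩⟩
  have hlim := (Complex.continuous_re.tendsto _).comp (h.tendsto_sqrt_mul_integral ht₀
    (hmem.mono fun q hq => hq.1) (hmem.mono fun q hq => (hζ _ hq.2).1)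
    (tendsto_add_comp_div_rpow_atTop_of_monotone h.hasExpSqMoments.monotone_levyM_one hζ
      (by linarith) ht₀))
  have hdiv := hlim.div_const √(2 * Real.pi)
  rw [Complex.ofReal_re, div_self (by positivity)] at hdiv
  refine hdiv.congr' (hmem.mono fun ⟨t, x⟩ ⟨ht, hy⟩ => ?_)
  have ht0 : 0 < t := ht₀.trans_le ht
  have htwo : t ^ (2 * H) = (t ^ (H - 1 / 2)) ^ 2 * t := by
    rw [← Real.rpow_mul_natCast ht0.le, ← Real.rpow_add_one ht0.ne']
    congr 1
    push_cast
    ring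
  simp only [Function.comp_apply, Complex.re_ofReal_mul, htwo]
  rw [integral_cexp_kernelPsi_fracKernelT hH h ht0 (hζ _ hy).1 (hζ _ hy).2
    (by field_simp), Complex.re_ofReal_mul,
    inv_two_pi_mul_sqrt_mul_exp_neg_eq (Real.rpow_pos_of_pos ht0 _)]

/-- Corollary 4.1, statement (2); relation (answ42): the distribution density
of the fractional Lévy motion with Hurst index `H ∈ (1/2,1)` satisfies
`p_t(x) ∼ (2πt^{2H}𝒦_H(x/t^{H+1/2}))^{−1/2} e^{t𝒟_H(x/t^{H+1/2})}` as `t + x → ∞`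
over `[t₀,∞) × [0,∞)`. -/
theorem fracLevy_density_asymptotics
    (μ : Measure ℝ)
    (hμ0 : μ {0} = 0)
    (hμint : Integrable (fun u : ℝ => min 1 (u ^ 2)) μ)
    (hμpos : 0 < μ (Set.Ioi (0 : ℝ)))
    (hμexp : ∀ C : ℝ, Integrable (fun u : ℝ => Real.exp (C * u)) (μ.restrict {u : ℝ | 1 ≤ |u|}))
    (γ : ℝ) (hγ : γ ∈ Set.Ioo (0 : ℝ) 1)
    (hT1 : Tendsto (fun ξ => levyM μ 4 ξ / (levyM μ 2 (γ * ξ)) ^ 2) atTop (nhds 0))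
    (hT2 : Tendsto
      (fun ξ => (Real.log (max (levyM μ 4 ξ / levyM μ 2 ξ) 1)
        + Real.log (Real.log (levyM μ 2 ξ))) / ξ) atTop (nhds 0))
    (H : ℝ) (hH : H ∈ Set.Ioo (1/2 : ℝ) 1)
    (ζ : ℝ → ℝ)
    (hζ : ∀ y : ℝ, 0 ≤ y → 0 ≤ ζ y ∧ kernelM μ (fracKernel H) 1 (ζ y) = y)
    (𝒟 𝒦 : ℝ → ℝ)
    (h𝒟 : ∀ y : ℝ, 𝒟 y = -(y * ζ y) + kernelM μ (fracKernel H) 0 (ζ y))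
    (h𝒦 : ∀ y : ℝ, 𝒦 y = kernelM μ (fracKernel H) 2 (ζ y))
    (p : ℝ → ℝ → ℝ)
    (hp : ∀ t x : ℝ, p t x = (1 / (2 * Real.pi)) *
      (∫ z : ℝ, Complex.exp (Complex.I * (x : ℂ) * (z : ℂ)
        + kernelPsi μ (fracKernelT H t) (z : ℂ))).re) :
    (∀ t > (0 : ℝ), ∀ x : ℝ,
      Integrable (fun z : ℝ => Complex.exp (Complex.I * (x : ℂ) * (z : ℂ)
        + kernelPsi μ (fracKernelT H t) (z : ℂ))))
    ∧ ∀ t₀ > (0 : ℝ), ∀ ε > (0 : ℝ), ∃ N : ℝ, ∀ t x : ℝ,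
        t₀ ≤ t → 0 ≤ x → N ≤ t + x →
        |p t x * Real.sqrt (2 * Real.pi * t ^ (2 * H) * 𝒦 (x / t ^ (H + 1/2)))
          * Real.exp (-(t * 𝒟 (x / t ^ (H + 1/2)))) - 1| < ε := by
  have := sigmaFinite_of_integrable_min_one_sq hμ0 hμint
  have hreg := saddlePointRegular_kernelMeasure_fracKernel hH
    (hasExpSqMoments_of_integrable hμint hμexp) hμpos hγ hT1 hT2
  have hM := kernelM_eq_levyM (continuous_fracKernel hH.1).measurable hreg.hasExpSqMoments
  simp only [hM] at hζ h𝒟 h𝒦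
  refine ⟨fun t ht x => integrable_cexp_kernelPsi_fracKernelT hH.1 hreg ht x,
    fun t₀ ht₀ ε hε => ?_⟩
  have hlim := tendsto_normalized_fourier_kernelPsi_fracKernelT hH.1 hreg hζ ht₀
  simp only [← hp, ← h𝒟, ← h𝒦] at hlim
  exact eventually_sumAtTop_iff.1 (Metric.tendsto_nhds.1 hlim ε hε)
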